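/- arXiv:1111.2273 — 10 statements merged into one kernel-verified Lean document; each statement's English description precedes it below -/
import Mathlib

section
/- Let X be an infinite dimensional real Banach space with norm ‖·‖. Then for every ε > 0 there exists an equivalent norm |||·||| on X such that the Banach–Mazur distance between (X, ‖·‖) and (X, |||·|||) is at most 1 + ε, and (X, |||·|||) admits an infinite equilateral set; i.e., there exist λ > 0 and an infinite set S ⊆ X with |||x − y||| = λ for all distinct x, y ∈ S. -/
/-- `N` is a norm on the real vector space `X`. -/
def IsNorm {X : Type*} [AddCommGroup X] [Module ℝ X] (N : X → ℝ) : Prop :=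
  (∀ x, N x = 0 ↔ x = 0) ∧ (∀ (a : ℝ) (x : X), N (a • x) = |a| * N x) ∧
    ∀ x y, N (x + y) ≤ N x + N y

/-!
A Ramsey argument applied to a bounded biorthogonal system `(xₙ, hₙ)` gives a subsequence whose
mutual distances all lie within `δ` of some `λ`. Put `μ = λ + 3δ`. For `m ≠ n`, adding a small
multiple of `hₘ - hₙ` to a norming functional of `xₘ - xₙ` raises its value there to exactly `μ`;
at every other difference `x_k - x_l`, up to sign, the correction is at most half as large, so the
modulus stays at most `μ`. The supremum of `|T|` over the functionals `T` of norm at most `1 + ε`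
with `|T| ≤ μ` on the differences is therefore a norm, `(1 + ε)`-equivalent to the original one,
for which the subsequence is `μ`-equilateral.
-/

open Filter Metric Topology

section Ramsey

/-- Ramsey's theorem for pairs, with colours in a compact space. -/
theorem exists_forall_nhds_exists_strictMono_of_isCompact {α : Type*} [TopologicalSpace α]
    {K : Set α} (hK : IsCompact K) (d : ℕ → ℕ → α) (hd : ∀ m n, d m n ∈ K) :
    ∃ a ∈ K, ∀ V ∈ 𝓝 a, ∃ φ : ℕ → ℕ, StrictMono φ ∧ ∀ m n, m < n → d (φ m) (φ n) ∈ V := by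
  let U : Ultrafilter ℕ := hyperfilter ℕ
  have exists_lim (u : ℕ → α) (hu : ∀ n, u n ∈ K) : ∃ a ∈ K, Tendsto u U (𝓝 a) :=
    hK.ultrafilter_le_nhds (U.map u) (le_principal_iff.2 (mem_map.2 (univ_mem' hu)))
  choose e heK he using fun m => exists_lim (d m) (hd m)
  obtain ⟨a, haK, ha⟩ := exists_lim e heK
  refine ⟨a, haK, fun V hV => ?_⟩
  let Good (m n : ℕ) : Prop := d m n ∈ V ∧ m < n
  have eventually_good : ∀ᶠ m in U, ∀ᶠ n in U, Good m n := by
    filter_upwards [ha.eventually (eventually_mem_nhds_iff.2 hV)] with m hm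
    exact ((he m).eventually_mem hm).and (Nat.hyperfilter_le_atTop (eventually_gt_atTop m))
  obtain ⟨φ, -, hφ⟩ := exists_seq_of_forall_finset_exists (fun m => ∀ᶠ n in U, Good m n) Good
    fun s hs => (eventually_good.and ((eventually_all_finset s).2 hs)).exists
  exact ⟨φ, fun m n hmn => (hφ m n hmn).2, fun m n hmn => (hφ m n hmn).1⟩

theorem exists_strictMono_pairwise_abs_dist_sub_le {α : Type*} [PseudoMetricSpace α] {x : ℕ → α}
    (hx : Bornology.IsBounded (Set.range x)) {δ : ℝ} (hδ : 0 < δ) :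
    ∃ lam : ℝ, 0 ≤ lam ∧ ∃ φ : ℕ → ℕ, StrictMono φ ∧
      Pairwise fun m n => |dist (x (φ m)) (x (φ n)) - lam| ≤ δ := by
  obtain ⟨C, hC⟩ := isBounded_range_iff.1 hx
  obtain ⟨lam, hlam, hV⟩ := exists_forall_nhds_exists_strictMono_of_isCompact
    isCompact_Icc (fun m n => dist (x m) (x n)) fun m n => ⟨dist_nonneg, hC m n⟩
  obtain ⟨φ, hφ, hdist⟩ := hV _ (closedBall_mem_nhds lam hδ)
  refine ⟨lam, hlam.1, φ, hφ, fun m n hmn => ?_⟩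
  rcases hmn.lt_or_gt with h | h
  · exact hdist m n h
  · rw [dist_comm]
    exact hdist n m h

end Ramsey

section Gap

theorem exists_dual_eq_zero_on_apply_eq_infDist {𝕜 E : Type*} [RCLike 𝕜]
    [SeminormedAddCommGroup E] [NormedSpace 𝕜 E] (F : Submodule 𝕜 E) (y : E) :
    ∃ g : StrongDual 𝕜 E, ‖g‖ ≤ 1 ∧ (∀ a ∈ F, g a = 0) ∧ g y = (infDist y F : 𝕜) := by
  obtain ⟨g, hg, hgy⟩ := exists_dual_vector'' 𝕜 (F.mkQ y)
  refine ⟨g.comp F.mkQL, ?_, fun a ha => ?_, ?_⟩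
  · refine ContinuousLinearMap.opNorm_le_bound _ zero_le_one fun x => ?_
    exact (g.le_of_opNorm_le hg _).trans (by gcongr; exact Submodule.Quotient.norm_mk_le F x)
  · have : F.mkQ a = 0 := (Submodule.Quotient.mk_eq_zero F).2 ha
    change g (F.mkQ a) = 0
    rw [this, map_zero]
  · refine hgy.trans (congrArg _ ?_)
    exact QuotientAddGroup.norm_mk (S := F.toAddSubgroup) y

variable {𝕜 E : Type*} [RCLike 𝕜] [NormedAddCommGroup E] [NormedSpace 𝕜 E]

theorem exists_ne_norm_sub_lt_of_forall_infDist_lt (F : Submodule 𝕜 E) [FiniteDimensional 𝕜 F]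
    {u : ℕ → E} {R r s : ℝ} (hu : ∀ n, ‖u n‖ ≤ R) (hF : ∀ n, infDist (u n) F < r)
    (hrs : 2 * r < s) : ∃ m n, m ≠ n ∧ ‖u m - u n‖ < s := by
  have exists_near (n : ℕ) : ∃ a : F, dist (u n) a < r := by
    obtain ⟨a, ha, h⟩ := (infDist_lt_iff F.nonempty).1 (hF n)
    exact ⟨⟨a, ha⟩, h⟩
  choose a ha using exists_near
  have a_mem (n : ℕ) : a n ∈ closedBall (0 : F) (r + R) := by
    rw [mem_closedBall]
    calc dist (a n : E) 0 ≤ dist (a n : E) (u n) + dist (u n) 0 := dist_triangle _ _ _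
      _ ≤ r + R := by
        rw [dist_comm, dist_zero_right]
        exact add_le_add (ha n).le (hu n)
  have : ProperSpace F := FiniteDimensional.proper 𝕜 F
  obtain ⟨l, -, φ, hφ, hl⟩ := tendsto_subseq_of_bounded isBounded_closedBall a_mem
  obtain ⟨M, hM⟩ := cauchySeq_iff.1 hl.cauchySeq (s - 2 * r) (by linarith)
  have hclose : dist (a (φ M) : E) (a (φ (M + 1))) < s - 2 * r := hM M le_rfl (M + 1) M.le_succ
  refine ⟨φ M, φ (M + 1), (hφ M.lt_succ_self).ne, ?_⟩
  have hright := ha (φ (M + 1))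
  rw [dist_comm] at hright
  rw [← dist_eq_norm]
  linarith [dist_triangle4 (u (φ M)) (a (φ M)) (a (φ (M + 1))) (u (φ (M + 1))), ha (φ M)]

theorem exists_mem_norm_le_le_infDist {Y : Submodule 𝕜 E} (hY : ¬ FiniteDimensional 𝕜 Y)
    (F : Submodule 𝕜 E) [FiniteDimensional 𝕜 F] {R r : ℝ} (hR : 1 < R) (hr : r < 1 / 2) :
    ∃ y ∈ Y, ‖y‖ ≤ R ∧ r ≤ infDist y F := by
  obtain ⟨ρ, hρ, hρR⟩ := exists_between hR
  have norm_ρ : ‖(ρ : 𝕜)‖ = ρ := RCLike.norm_of_nonneg (zero_le_one.trans hρ.le)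
  obtain ⟨u, hu, hsep⟩ := exists_seq_norm_le_one_le_norm_sub' (hρ.trans_eq norm_ρ.symm)
    (norm_ρ.trans_lt hρR) hY
  by_contra! hnear
  obtain ⟨m, n, hmn, hlt⟩ := exists_ne_norm_sub_lt_of_forall_infDist_lt F hu
    (fun n => hnear (u n) (u n).2 (hu n)) (by linarith : 2 * r < 1)
  exact hlt.not_ge (hsep hmn)

end Gap

section Biorthogonal

/-- The vectors `x i` and the functionals `h i` form a biorthogonal system: `h i (x j) = δᵢⱼ`. It
provides the functionals `h i` that adjust the distances between the `x i` one pair at a time. The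
Kronecker delta is split into two fields to avoid decidable equality on the index type. -/
structure IsBiorthogonal {ι 𝕜 E : Type*} [NontriviallyNormedField 𝕜] [SeminormedAddCommGroup E]
    [NormedSpace 𝕜 E] (h : ι → StrongDual 𝕜 E) (x : ι → E) : Prop where
  apply_self : ∀ i, h i (x i) = 1
  apply_of_ne : ∀ ⦃i j⦄, i ≠ j → h i (x j) = 0

namespace IsBiorthogonal

section NormedField

variable {ι κ 𝕜 E : Type*} [NontriviallyNormedField 𝕜] [SeminormedAddCommGroup E]
  [NormedSpace 𝕜 E] {h : ι → StrongDual 𝕜 E} {x : ι → E}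

theorem comp_injective (hx : IsBiorthogonal h x) {φ : κ → ι} (hφ : φ.Injective) :
    IsBiorthogonal (h ∘ φ) (x ∘ φ) where
  apply_self i := hx.apply_self (φ i)
  apply_of_ne _ _ hij := hx.apply_of_ne (hφ.ne hij)

theorem injective (hx : IsBiorthogonal h x) : Function.Injective x := by
  intro i j hij
  by_contra hne
  have : (1 : 𝕜) = 0 := by rw [← hx.apply_self i, hij, hx.apply_of_ne hne]
  exact one_ne_zero this

theorem sub_apply_sub (hx : IsBiorthogonal h x) {m n : ι} (hmn : m ≠ n) :
    (h m - h n) (x m - x n) = 2 := by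
  simp only [sub_apply, map_sub, hx.apply_self, hx.apply_of_ne hmn,
    hx.apply_of_ne hmn.symm]
  norm_num

theorem norm_sub_apply_sub_le_one (hx : IsBiorthogonal h x) {m n k l : ι}
    (h₁ : ¬(k = m ∧ l = n)) (h₂ : ¬(k = n ∧ l = m)) :
    ‖(h m - h n) (x k - x l)‖ ≤ 1 := by
  classical
  have apply_eq (i j : ι) : h i (x j) = if i = j then 1 else 0 := by
    split_ifs with hij
    · rw [hij, hx.apply_self]
    · exact hx.apply_of_ne hij
  simp only [sub_apply, map_sub, apply_eq]
  split_ifs <;> simp_all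

end NormedField

variable {ι 𝕜 E : Type*} [RCLike 𝕜] [SeminormedAddCommGroup E] [NormedSpace 𝕜 E]
  {h : ι → StrongDual 𝕜 E} {x : ι → E}

theorem exists_dual_apply_sub_eq (hx : IsBiorthogonal h x) {K lam δ : ℝ} (hK : ∀ i, ‖h i‖ ≤ K)
    (hdist : Pairwise fun k l => |‖x k - x l‖ - lam| ≤ δ) {m n : ι} (hmn : m ≠ n) :
    ∃ T : StrongDual 𝕜 E, ‖T‖ ≤ 1 + 4 * K * δ ∧ ‖T (x m - x n)‖ = lam + 3 * δ ∧
      Pairwise fun k l => ‖T (x k - x l)‖ ≤ lam + 3 * δ := by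
  obtain ⟨f, hf, hfmn⟩ := exists_dual_vector'' 𝕜 (x m - x n)
  set c : ℝ := (lam + 3 * δ - ‖x m - x n‖) / 2 with hc
  obtain ⟨hlow, hupp⟩ := abs_le.1 (hdist hmn)
  have hc₀ : 0 ≤ c := by linarith
  have hc₂ : c ≤ 2 * δ := by linarith
  have hδ : 0 ≤ δ := (abs_nonneg _).trans (hdist hmn)
  have norm_c : ‖(c : 𝕜)‖ = c := RCLike.norm_of_nonneg hc₀
  let T : StrongDual 𝕜 E := f + (c : 𝕜) • (h m - h n)
  have T_apply (z : E) : T z = f z + c * (h m - h n) z := rfl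
  have T_norm : ‖T‖ ≤ 1 + 4 * K * δ := by
    calc ‖T‖ ≤ ‖f‖ + c * ‖h m - h n‖ := by
          simpa only [norm_smul, norm_c] using norm_add_le f ((c : 𝕜) • (h m - h n))
      _ ≤ 1 + (2 * δ) * (K + K) := by
          have := norm_sub_le_of_le (hK m) (hK n)
          gcongr
      _ = 1 + 4 * K * δ := by ring
  have T_mn : ‖T (x m - x n)‖ = lam + 3 * δ := by
    have : T (x m - x n) = ((lam + 3 * δ : ℝ) : 𝕜) := by
      rw [T_apply, hfmn, hx.sub_apply_sub hmn, hc]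
      push_cast
      ring
    rw [this, RCLike.norm_of_nonneg (by linarith [norm_nonneg (x m - x n)])]
  refine ⟨T, T_norm, T_mn, fun k l hkl => ?_⟩
  change ‖T (x k - x l)‖ ≤ lam + 3 * δ
  by_cases h₁ : k = m ∧ l = n
  · rw [h₁.1, h₁.2, T_mn]
  by_cases h₂ : k = n ∧ l = m
  · rw [h₂.1, h₂.2, map_sub, norm_sub_rev, ← map_sub, T_mn]
  calc ‖T (x k - x l)‖ ≤ ‖f (x k - x l)‖ + c * ‖(h m - h n) (x k - x l)‖ := by
        rw [T_apply]
        simpa only [norm_mul, norm_c] using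
          norm_add_le (f (x k - x l)) ((c : 𝕜) * (h m - h n) (x k - x l))
    _ ≤ ‖x k - x l‖ + c * 1 := by
        gcongr
        · simpa only [one_mul] using f.le_of_opNorm_le hf (x k - x l)
        · exact hx.norm_sub_apply_sub_le_one h₁ h₂
    _ ≤ lam + 3 * δ := by linarith [(abs_le.1 (hdist hkl)).2]

end IsBiorthogonal

variable {𝕜 E : Type*} [RCLike 𝕜] [NormedAddCommGroup E] [NormedSpace 𝕜 E]

theorem exists_biorthogonal_extension (hE : ¬ FiniteDimensional 𝕜 E)
    (s : Finset (E × StrongDual 𝕜 E)) {R K : ℝ} (hR : 1 < R) (hK : 2 < K) :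
    ∃ (y : E) (g : StrongDual 𝕜 E), ‖y‖ ≤ R ∧ ‖g‖ ≤ K ∧ g y = 1 ∧
      ∀ p ∈ s, p.2 y = 0 ∧ g p.1 = 0 := by
  classical
  let F : Submodule 𝕜 E := Submodule.span 𝕜 (s.image Prod.fst : Finset E)
  have : FiniteDimensional 𝕜 F := FiniteDimensional.span_finset 𝕜 _
  let L : E →ₗ[𝕜] (s → 𝕜) := LinearMap.pi fun p => p.1.2.toLinearMap
  have ker_infinite : ¬ FiniteDimensional 𝕜 L.ker := by
    intro _
    have : FiniteDimensional 𝕜 (E ⧸ L.ker) := Submodule.CoFG.ker L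
    exact hE (Module.Finite.of_submodule_quotient L.ker)
  have hK₀ : 0 < K := two_pos.trans hK
  have hKinv : K⁻¹ < 1 / 2 := by
    rw [one_div]
    exact inv_strictAnti₀ two_pos hK
  obtain ⟨y, hyL, hyR, hyF⟩ := exists_mem_norm_le_le_infDist ker_infinite F hR hKinv
  obtain ⟨g, hg, hgF, hgy⟩ := exists_dual_eq_zero_on_apply_eq_infDist F y
  set d := infDist y F
  have hd : 0 < d := (inv_pos.2 hK₀).trans_le hyF
  refine ⟨y, (d⁻¹ : 𝕜) • g, hyR, ?_, ?_, fun p hp => ⟨?_, ?_⟩⟩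
  · calc ‖(d⁻¹ : 𝕜) • g‖ = d⁻¹ * ‖g‖ := by
          rw [norm_smul, norm_inv, RCLike.norm_of_nonneg hd.le]
      _ ≤ K * 1 := by
          gcongr
          exact inv_le_of_inv_le₀ hK₀ hyF
      _ = K := mul_one K
  · rw [smul_apply, hgy, smul_eq_mul]
    exact inv_mul_cancel₀ (RCLike.ofReal_ne_zero.2 hd.ne')
  · exact congrFun (LinearMap.mem_ker.1 hyL) ⟨p, hp⟩
  · have : p.1 ∈ F := Submodule.subset_span (Finset.mem_image_of_mem _ hp)
    rw [smul_apply, hgF _ this, smul_zero]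

theorem exists_seq_isBiorthogonal (hE : ¬ FiniteDimensional 𝕜 E) {R K : ℝ} (hR : 1 < R)
    (hK : 2 < K) :
    ∃ (x : ℕ → E) (h : ℕ → StrongDual 𝕜 E),
      (∀ n, ‖x n‖ ≤ R) ∧ (∀ n, ‖h n‖ ≤ K) ∧ IsBiorthogonal h x := by
  let r (p q : E × StrongDual 𝕜 E) : Prop := p.2 q.1 = 0 ∧ q.2 p.1 = 0
  have : Std.Symm r := ⟨fun _ _ => And.symm⟩
  obtain ⟨s, hs, hr⟩ := exists_seq_of_forall_finset_exists'
    (fun p : E × StrongDual 𝕜 E => ‖p.1‖ ≤ R ∧ ‖p.2‖ ≤ K ∧ p.2 p.1 = 1) r fun t _ => by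
      obtain ⟨y, g, hy, hg, hgy, ht⟩ := exists_biorthogonal_extension hE t hR hK
      exact ⟨(y, g), ⟨hy, hg, hgy⟩, ht⟩
  exact ⟨fun n => (s n).1, fun n => (s n).2, fun n => (hs n).1, fun n => (hs n).2.1,
    ⟨fun n => (hs n).2.2, fun m n hmn => (hr hmn).1⟩⟩

end Biorthogonal

section Renorming

theorem exists_seminorm_eq_of_exists_dual {𝕜 E : Type*} [RCLike 𝕜] [SeminormedAddCommGroup E]
    [NormedSpace 𝕜 E] {D : Set E} {C μ : ℝ} (hC : 1 ≤ C) (hD : ∀ v ∈ D, ‖v‖ ≤ μ)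
    (hdual : ∀ v ∈ D, ∃ T : StrongDual 𝕜 E, ‖T‖ ≤ C ∧ ‖T v‖ = μ ∧ ∀ w ∈ D, ‖T w‖ ≤ μ) :
    ∃ p : Seminorm 𝕜 E, (∀ z, ‖z‖ ≤ p z ∧ p z ≤ C * ‖z‖) ∧ ∀ v ∈ D, p v = μ := by
  let 𝒯 : Set (StrongDual 𝕜 E) := {T | ‖T‖ ≤ C ∧ ∀ w ∈ D, ‖T w‖ ≤ μ}
  have le_bound (z : E) (T : 𝒯) : ‖T.1 z‖ ≤ C * ‖z‖ := T.1.le_of_opNorm_le T.2.1 z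
  have bdd : BddAbove (Set.range fun T : 𝒯 => T.1.toLinearMap.toSeminorm) :=
    Seminorm.bddAbove_range_iff.2 fun z => ⟨C * ‖z‖, Set.forall_mem_range.2 (le_bound z)⟩
  let p : Seminorm 𝕜 E := ⨆ T : 𝒯, T.1.toLinearMap.toSeminorm
  have p_apply (z : E) : p z = ⨆ T : 𝒯, ‖T.1 z‖ := Seminorm.iSup_apply bdd
  have le_p {T : StrongDual 𝕜 E} (hT : T ∈ 𝒯) (z : E) : ‖T z‖ ≤ p z :=
    le_ciSup bdd ⟨T, hT⟩ z
  refine ⟨p, fun z => ⟨?_, ?_⟩, fun v hv => le_antisymm ?_ ?_⟩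
  · obtain ⟨f, hf, hfz⟩ := exists_dual_vector'' 𝕜 z
    have f_mem : f ∈ 𝒯 := by
      refine ⟨hf.trans hC, fun w hw => (f.le_of_opNorm_le hf w).trans ?_⟩
      rw [one_mul]
      exact hD w hw
    simpa only [hfz, RCLike.norm_ofReal, abs_norm] using le_p f_mem z
  · rw [p_apply]
    exact Real.iSup_le (le_bound z) (by positivity)
  · rw [p_apply]
    exact Real.iSup_le (fun T => T.2.2 v hv) ((norm_nonneg v).trans (hD v hv))
  · obtain ⟨T, hTC, hTv, hTD⟩ := hdual v hv
    exact hTv.symm.trans_le (le_p ⟨hTC, hTD⟩ v)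

theorem IsNorm.of_norm_le {X : Type*} [NormedAddCommGroup X] [NormedSpace ℝ X]
    (p : Seminorm ℝ X) (hp : ∀ x, ‖x‖ ≤ p x) : IsNorm p := by
  refine ⟨fun x => ⟨fun h => ?_, fun h => ?_⟩, map_smul_eq_mul p, map_add_le_add p⟩
  · exact norm_le_zero_iff.1 (h ▸ hp x)
  · rw [h, map_zero]

theorem exists_equivalence_constants {X : Type*} [Norm X] {N : X → ℝ} {C : ℝ} (hC : 0 < C)
    (hN : ∀ x, ‖x‖ ≤ N x ∧ N x ≤ C * ‖x‖) :
    ∃ a b : ℝ, 0 < a ∧ 0 < b ∧ (∀ x, a * N x ≤ ‖x‖ ∧ ‖x‖ ≤ b * N x) ∧ b / a ≤ C := by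
  refine ⟨C⁻¹, 1, inv_pos.2 hC, one_pos, fun x => ⟨?_, ?_⟩, ?_⟩
  · exact (inv_mul_le_iff₀ hC).2 (hN x).2
  · rw [one_mul]
    exact (hN x).1
  · rw [one_div, inv_inv]

end Renorming

theorem renorm_close_with_infinite_equilateral_general {𝕜 X : Type*} [RCLike 𝕜]
    [NormedAddCommGroup X] [NormedSpace 𝕜 X] (hX : ¬ FiniteDimensional 𝕜 X) {ε : ℝ}
    (hε : 0 < ε) :
    ∃ p : Seminorm 𝕜 X, (∀ x, ‖x‖ ≤ p x ∧ p x ≤ (1 + ε) * ‖x‖) ∧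
      ∃ S : Set X, S.Infinite ∧ ∃ lam : ℝ, 0 < lam ∧ S.Pairwise fun x y => p (x - y) = lam := by
  obtain ⟨x₀, h₀, hx₀, hh₀, hbi₀⟩ := exists_seq_isBiorthogonal hX one_lt_two
    (by norm_num : (2 : ℝ) < 4)
  obtain ⟨δ, rfl⟩ : ∃ δ, ε = 4 * 4 * δ := ⟨ε / 16, by ring⟩
  have hδ : 0 < δ := by linarith
  have bounded : Bornology.IsBounded (Set.range x₀) :=
    isBounded_iff_forall_norm_le.2 ⟨2, Set.forall_mem_range.2 hx₀⟩
  obtain ⟨lam, hlam, φ, hφ, hdist⟩ := exists_strictMono_pairwise_abs_dist_sub_le bounded hδ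
  simp only [dist_eq_norm] at hdist
  have hbi := hbi₀.comp_injective hφ.injective
  set x := x₀ ∘ φ
  let D : Set X := {v | ∃ k l, k ≠ l ∧ x k - x l = v}
  have norm_le : ∀ v ∈ D, ‖v‖ ≤ lam + 3 * δ := by
    rintro _ ⟨k, l, hkl, rfl⟩
    have := (abs_le.1 (hdist hkl)).2
    exact (sub_le_iff_le_add'.1 this).trans (by linarith)
  obtain ⟨p, hp, hpD⟩ := exists_seminorm_eq_of_exists_dual (𝕜 := 𝕜) (C := 1 + 4 * 4 * δ)
    (by linarith) norm_le <| by
      rintro _ ⟨m, n, hmn, rfl⟩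
      obtain ⟨T, hT, hTmn, hTkl⟩ :=
        hbi.exists_dual_apply_sub_eq (fun i => hh₀ (φ i)) hdist hmn
      exact ⟨T, hT, hTmn, by rintro _ ⟨k, l, hkl, rfl⟩; exact hTkl hkl⟩
  refine ⟨p, hp, Set.range x, Set.infinite_range_of_injective hbi.injective, lam + 3 * δ,
    by linarith, ?_⟩
  rintro _ ⟨k, rfl⟩ _ ⟨l, rfl⟩ hne
  exact hpD _ ⟨k, l, ne_of_apply_ne x hne, rfl⟩

/-- **Theorem 1.** Every infinite dimensional real Banach space admits, for every `ε > 0`,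
an equivalent norm `|||·|||` at Banach–Mazur distance at most `1 + ε` from the original norm
(witnessed by the identity: `a * |||x||| ≤ ‖x‖ ≤ b * |||x|||` with `b / a ≤ 1 + ε`)
such that `X` with the new norm admits an infinite equilateral set. -/
theorem renorm_close_with_infinite_equilateral
    (X : Type*) [NormedAddCommGroup X] [NormedSpace ℝ X] [CompleteSpace X]
    (hX : ¬ FiniteDimensional ℝ X) {ε : ℝ} (hε : 0 < ε) :
    ∃ N : X → ℝ, IsNorm N ∧
      (∃ a b : ℝ, 0 < a ∧ 0 < b ∧ (∀ x, a * N x ≤ ‖x‖ ∧ ‖x‖ ≤ b * N x) ∧ b / a ≤ 1 + ε) ∧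
      (∃ S : Set X, S.Infinite ∧ ∃ lam : ℝ, 0 < lam ∧
        ∀ x ∈ S, ∀ y ∈ S, x ≠ y → N (x - y) = lam) := by
  obtain ⟨p, hp, S, hS, lam, hlam, hSlam⟩ := renorm_close_with_infinite_equilateral_general hX hε
  exact ⟨p, IsNorm.of_norm_le p fun x => (hp x).1, exists_equivalence_constants (by linarith) hp,
    S, hS, lam, hlam, hSlam⟩
end

section
/- Every real Banach space X containing a closed subspace linearly isomorphic to c₀ admits an infinite equilateral set; i.e., there exist λ > 0 and an infinite set S ⊆ X with ‖x − y‖ = λ for all distinct x, y ∈ S. -/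
open scoped ZeroAtInfty

/-!
Write `c₀₀` for the finitely supported sequences with the sup norm. James' distortion argument
passes from a copy of `c₀` to an almost isometric one: the norms of an operator `T` on the tails of
the unit ball of `c₀₀` decrease to a positive limit, and disjoint blocks almost attaining them far
out, rescaled by one of these norms, span the new copy.

So let `‖T‖ ≤ 1` and `‖T eₖ‖ ≥ 1 - 1 / 100`. The points
`pⱼ = ∑ k < j, (1 / 2 + ε k j) • T eₖ - (1 / 2) • T eⱼ` with `ε k j ∈ [0, 1 / 8]` satisfy, for
`i < j`, `pⱼ - pᵢ = T a` where `a` has its dominant coordinate `1 + ε i j` at `i`. They are at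
mutual distance `1` exactly when `ε i j = a i - ‖T a‖` for all `i < j`. The right-hand side is
small, nonnegative on the cone of sequences peaking at `i`, and concave in `a`; a small nonnegative
concave function has a small Lipschitz constant away from the boundary of its domain, so this is a
fixed point equation for a uniform contraction of the cube `[0, 1 / 8] ^ (ℕ × ℕ)`.
-/

open Filter Set Topology

section Contraction

lemma exists_fixedPoint_pi_of_uniform_contraction {ι β : Type*} [MetricSpace β] [BoundedSpace β]
    [CompleteSpace β] [Nonempty β] {K : NNReal} (hK : K < 1) (F : (ι → β) → ι → β)
    (hF : ∀ e e' r, 0 < r → (∀ i, dist (e i) (e' i) ≤ r) → ∀ i, dist (F e i) (F e' i) ≤ K * r) :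
    ∃ e, F e = e := by
  let G : UniformFun ι β → UniformFun ι β := UniformFun.ofFun ∘ F ∘ UniformFun.toFun
  have hG : ContractingWith K G := by
    refine ⟨hK, LipschitzWith.of_dist_le_mul fun e e' ↦ ?_⟩
    rcases eq_or_ne e e' with rfl | hne
    · simp
    · exact (UniformFun.dist_le (by positivity)).2
        (hF _ _ _ (dist_pos.2 hne) ((UniformFun.dist_le dist_nonneg).1 le_rfl))
  have : Nonempty (UniformFun ι β) := inferInstanceAs (Nonempty (ι → β))
  exact ⟨_, hG.fixedPoint_isFixedPt⟩

lemma mul_sub_le_of_concaveOn {E : Type*} [AddCommGroup E] [Module ℝ E] {s : Set E} {f : E → ℝ}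
    (hf : ConcaveOn ℝ s f) {x y : E} {t : ℝ} (ht : 0 ≤ t) (hx : x ∈ s)
    (hz : y + t • (y - x) ∈ s) (hfz : 0 ≤ f (y + t • (y - x))) :
    t * (f x - f y) ≤ f y := by
  have hy : (t / (1 + t)) • x + (1 / (1 + t)) • (y + t • (y - x)) = y := by
    match_scalars
    · field_simp
      ring
    · field_simp
  have hconc := hf.2 hx hz (by positivity : 0 ≤ t / (1 + t)) (by positivity : 0 ≤ 1 / (1 + t))
    (by field_simp; ring)
  rw [hy, smul_eq_mul, smul_eq_mul] at hconc
  have hfx : t / (1 + t) * f x ≤ f y := by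
    have : 0 ≤ 1 / (1 + t) * f (y + t • (y - x)) := by positivity
    linarith
  rw [div_mul_eq_mul_div, div_le_iff₀ (by positivity)] at hfx
  linarith

end Contraction

/-- The closed unit ball of `c₀₀(ι)`, the space of finitely supported real families under the
sup norm. An operator `T` on `c₀₀(ι)` has norm at most `C` when `‖T a‖ ≤ C` on this set. -/
def unitCube (ι : Type*) : Set (ι →₀ ℝ) := {a | ∀ k, |a k| ≤ 1}

/-- The sequences in the unit ball of `c₀₀` supported in `[n, ∞)`. -/
def tailCube (n : ℕ) : Set (ℕ →₀ ℝ) := {a ∈ unitCube ℕ | ∀ k < n, a k = 0}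

/-- The cone of families whose largest coordinate in absolute value is the one at `i`, and is
nonnegative. -/
def peakCone {ι : Type*} (i : ι) : Set (ι →₀ ℝ) := {a | ∀ k, |a k| ≤ a i}

section UnitCube

variable {ι κ X : Type*} [SeminormedAddCommGroup X] [NormedSpace ℝ X]

lemma single_mem_unitCube (i : ι) : Finsupp.single i 1 ∈ unitCube ι := fun k ↦ by
  classical
  rw [Finsupp.single_apply]
  split_ifs <;> simp

lemma linearCombination_mem_unitCube {b : κ → ι →₀ ℝ} (hb : ∀ k, b k ∈ unitCube ι)
    (hdisj : Pairwise (Function.onFun Disjoint fun k ↦ (b k).support)) {a : κ →₀ ℝ}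
    (ha : a ∈ unitCube κ) : Finsupp.linearCombination ℝ b a ∈ unitCube ι := fun i ↦ by
  rw [Finsupp.linearCombination_apply, Finsupp.sum, Finsupp.finsetSum_apply]
  simp only [Finsupp.smul_apply, smul_eq_mul]
  by_cases h : ∃ k ∈ a.support, b k i ≠ 0
  · obtain ⟨k, hk, hki⟩ := h
    rw [Finset.sum_eq_single_of_mem k hk fun l _ hl ↦ ?_, abs_mul]
    · exact mul_le_one₀ (ha k) (abs_nonneg _) (hb k i)
    · have hli : i ∉ (b l).support :=
        Finset.disjoint_right.1 (hdisj hl) (Finsupp.mem_support_iff.2 hki)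
      rw [Finsupp.notMem_support_iff.1 hli, mul_zero]
  · push Not at h
    rw [Finset.sum_eq_zero fun k hk ↦ by rw [h k hk, mul_zero]]
    simp

lemma linearCombination_mem_tailCube {n : ℕ} {b : κ → ℕ →₀ ℝ} (hb : ∀ k, b k ∈ tailCube n)
    (hdisj : Pairwise (Function.onFun Disjoint fun k ↦ (b k).support)) {a : κ →₀ ℝ}
    (ha : a ∈ unitCube κ) : Finsupp.linearCombination ℝ b a ∈ tailCube n := by
  refine ⟨linearCombination_mem_unitCube (fun k ↦ (hb k).1) hdisj ha, fun i hi ↦ ?_⟩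
  rw [Finsupp.linearCombination_apply, Finsupp.sum, Finsupp.finsetSum_apply]
  exact Finset.sum_eq_zero fun k _ ↦ by simp [(hb k).2 i hi]

lemma norm_map_le_of_forall_abs_le {T : (ι →₀ ℝ) →ₗ[ℝ] X} (hT : ∀ a ∈ unitCube ι, ‖T a‖ ≤ 1)
    {a : ι →₀ ℝ} {R : ℝ} (hR : 0 ≤ R) (ha : ∀ k, |a k| ≤ R) : ‖T a‖ ≤ R := by
  rcases hR.eq_or_lt with rfl | hR
  · have : a = 0 := Finsupp.ext fun k ↦ abs_nonpos_iff.1 (ha k)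
    simp [this]
  · have h := hT (R⁻¹ • a) fun k ↦ by
      rw [Finsupp.smul_apply, smul_eq_mul, abs_mul, abs_inv, abs_of_pos hR,
        inv_mul_le_one₀ hR]
      exact ha k
    rwa [map_smul, norm_smul, norm_inv, Real.norm_of_nonneg hR.le, inv_mul_le_one₀ hR] at h

end UnitCube

section Distortion

variable {X : Type*} [SeminormedAddCommGroup X] [NormedSpace ℝ X]
  {T : (ℕ →₀ ℝ) →ₗ[ℝ] X} {C m : ℝ}

/-- The norm of the restriction of the operator `T` on `c₀₀` to the sequences supported in
`[n, ∞)`; this is only meaningful when `T` is bounded, by the convention for `sSup`. -/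
noncomputable def tailNorm (T : (ℕ →₀ ℝ) →ₗ[ℝ] X) (n : ℕ) : ℝ := sSup ((‖T ·‖) '' tailCube n)

lemma bddAbove_norm_image_tailCube (hC : ∀ a ∈ unitCube ℕ, ‖T a‖ ≤ C) (n : ℕ) :
    BddAbove ((‖T ·‖) '' tailCube n) :=
  ⟨C, forall_mem_image.2 fun a ha ↦ hC a ha.1⟩

lemma norm_le_tailNorm (hC : ∀ a ∈ unitCube ℕ, ‖T a‖ ≤ C) {n : ℕ} {a : ℕ →₀ ℝ}
    (ha : a ∈ tailCube n) : ‖T a‖ ≤ tailNorm T n :=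
  le_csSup (bddAbove_norm_image_tailCube hC n) (mem_image_of_mem _ ha)

lemma single_mem_tailCube (n : ℕ) : Finsupp.single n 1 ∈ tailCube n :=
  ⟨single_mem_unitCube n, fun _ hk ↦ Finsupp.single_eq_of_ne hk.ne⟩

lemma antitone_tailNorm (hC : ∀ a ∈ unitCube ℕ, ‖T a‖ ≤ C) : Antitone (tailNorm T) :=
  fun p q hpq ↦ csSup_le_csSup (bddAbove_norm_image_tailCube hC p)
    ⟨_, mem_image_of_mem _ (single_mem_tailCube q)⟩
    (image_mono fun _ ha ↦ ⟨ha.1, fun k hk ↦ ha.2 k (hk.trans_le hpq)⟩)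

lemma exists_forall_mul_tailNorm_lt (hC : ∀ a ∈ unitCube ℕ, ‖T a‖ ≤ C) (hm : 0 < m)
    (hTm : ∀ n, m ≤ tailNorm T n) {δ : ℝ} (hδ : 0 < δ) :
    ∃ N, ∀ n, (1 - δ) * tailNorm T N < tailNorm T n := by
  have hbdd : BddBelow (range (tailNorm T)) := ⟨m, forall_mem_range.2 hTm⟩
  have hinf : 0 < ⨅ n, tailNorm T n := hm.trans_le (le_ciInf hTm)
  have hlim := (tendsto_atTop_ciInf (antitone_tailNorm hC) hbdd).const_mul (1 - δ)
  have hlt : (1 - δ) * ⨅ n, tailNorm T n < ⨅ n, tailNorm T n := by nlinarith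
  obtain ⟨N, hN⟩ := (hlim.eventually_lt_const hlt).exists
  exact ⟨N, fun n ↦ hN.trans_le (ciInf_le hbdd n)⟩

lemma exists_seq_disjoint_support {P : (ℕ →₀ ℝ) → Prop}
    (hP : ∀ n, ∃ a, P a ∧ ∀ k < n, a k = 0) :
    ∃ b : ℕ → ℕ →₀ ℝ, (∀ k, P (b k)) ∧
      Pairwise (Function.onFun Disjoint fun k ↦ (b k).support) := by
  have : Std.Symm fun a b : ℕ →₀ ℝ ↦ Disjoint a.support b.support := ⟨fun _ _ h ↦ h.symm⟩
  refine exists_seq_of_forall_finset_exists' P (fun a b ↦ Disjoint a.support b.support)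
    fun s _ ↦ ?_
  obtain ⟨a, ha, ha0⟩ := hP ((s.sup Finsupp.support).sup id + 1)
  refine ⟨a, ha, fun c hc ↦ Finset.disjoint_left.2 fun k hk ↦ ?_⟩
  have hks : k ∈ s.sup Finsupp.support := Finset.le_sup (f := Finsupp.support) hc hk
  exact Finsupp.notMem_support_iff.2 (ha0 k (Nat.lt_succ_of_le (Finset.le_sup (f := id) hks)))

theorem exists_almost_isometric_of_bounded_below (hC : ∀ a ∈ unitCube ℕ, ‖T a‖ ≤ C) (hm : 0 < m)
    (hTm : ∀ n, m ≤ ‖T (Finsupp.single n 1)‖) {δ : ℝ} (hδ : 0 < δ) :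
    ∃ S : (ℕ →₀ ℝ) →ₗ[ℝ] X, (∀ a ∈ unitCube ℕ, ‖S a‖ ≤ 1) ∧
      ∀ n, 1 - δ ≤ ‖S (Finsupp.single n 1)‖ := by
  have hmT (n : ℕ) : m ≤ tailNorm T n :=
    (hTm n).trans (norm_le_tailNorm hC (single_mem_tailCube n))
  obtain ⟨N, hN⟩ := exists_forall_mul_tailNorm_lt hC hm hmT hδ
  have hpos : 0 < tailNorm T N := hm.trans_le (hmT N)
  obtain ⟨b, hb, hdisj⟩ := exists_seq_disjoint_support
    (P := fun a ↦ a ∈ tailCube N ∧ (1 - δ) * tailNorm T N < ‖T a‖) fun n ↦ by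
      obtain ⟨_, ⟨a, ha, rfl⟩, hlt⟩ := exists_lt_of_lt_csSup
        ⟨_, mem_image_of_mem _ (single_mem_tailCube (max n N))⟩ (hN (max n N))
      exact ⟨a, ⟨⟨ha.1, fun k hk ↦ ha.2 k (lt_max_of_lt_right hk)⟩, hlt⟩,
        fun k hk ↦ ha.2 k (lt_max_of_lt_left hk)⟩
  refine ⟨(tailNorm T N)⁻¹ • T ∘ₗ Finsupp.linearCombination ℝ b, fun a ha ↦ ?_, fun n ↦ ?_⟩
  · rw [LinearMap.smul_apply, norm_smul, norm_inv, Real.norm_of_nonneg hpos.le,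
      inv_mul_le_one₀ hpos]
    exact norm_le_tailNorm hC (linearCombination_mem_tailCube (fun k ↦ (hb k).1) hdisj ha)
  · rw [LinearMap.smul_apply, norm_smul, norm_inv, Real.norm_of_nonneg hpos.le,
      le_inv_mul_iff₀ hpos, LinearMap.comp_apply, Finsupp.linearCombination_single, one_smul,
      mul_comm]
    exact (hb n).2.le

end Distortion

section PeakDefect

variable {ι X : Type*} [SeminormedAddCommGroup X] [NormedSpace ℝ X]
  {T : (ι →₀ ℝ) →ₗ[ℝ] X} {i : ι}

/-- The amount by which `‖T a‖` falls short of the coordinate `a i`. For `a` in `peakCone i` that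
coordinate is the sup norm of `a`, which `‖T a‖` would equal if `T` were isometric. -/
noncomputable def peakDefect (T : (ι →₀ ℝ) →ₗ[ℝ] X) (i : ι) (a : ι →₀ ℝ) : ℝ := a i - ‖T a‖

lemma concaveOn_peakDefect (T : (ι →₀ ℝ) →ₗ[ℝ] X) (i : ι) :
    ConcaveOn ℝ univ (peakDefect T i) :=
  ((Finsupp.lapply i : (ι →₀ ℝ) →ₗ[ℝ] ℝ).concaveOn convex_univ).sub
    (convexOn_univ_norm.comp_linearMap T)

lemma peakDefect_nonneg (hT : ∀ a ∈ unitCube ι, ‖T a‖ ≤ 1) {a : ι →₀ ℝ} (ha : a ∈ peakCone i) :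
    0 ≤ peakDefect T i a :=
  sub_nonneg.2 (norm_map_le_of_forall_abs_le hT ((abs_nonneg _).trans (ha i)) ha)

lemma peakDefect_le (hT : ∀ a ∈ unitCube ι, ‖T a‖ ≤ 1) {δ : ℝ}
    (hTi : 1 - δ ≤ ‖T (Finsupp.single i 1)‖) {a : ι →₀ ℝ} (ha : a ∈ peakCone i) :
    peakDefect T i a ≤ 2 * δ * a i := by
  have hai : 0 ≤ a i := (abs_nonneg _).trans (ha i)
  -- Reflecting all coordinates of `a` except the `i`-th leaves the sup norm unchanged.
  have hrefl : ‖T ((2 * a i) • Finsupp.single i 1 - a)‖ ≤ a i := by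
    refine norm_map_le_of_forall_abs_le hT hai fun k ↦ ?_
    rcases eq_or_ne k i with rfl | hk
    · simp [two_mul, abs_of_nonneg hai]
    · simpa [hk] using ha k
  have htri : 2 * a i * ‖T (Finsupp.single i 1)‖ ≤ a i + ‖T a‖ := by
    calc 2 * a i * ‖T (Finsupp.single i 1)‖
        = ‖T ((2 * a i) • Finsupp.single i 1 - a) + T a‖ := by
          rw [← map_add, sub_add_cancel, map_smul, norm_smul, Real.norm_of_nonneg (by positivity)]
      _ ≤ a i + ‖T a‖ := (norm_add_le _ _).trans (by gcongr)
  have := mul_le_mul_of_nonneg_left hTi hai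
  unfold peakDefect
  linarith

lemma add_mem_peakCone {a v : ι →₀ ℝ} {r : ℝ} (hai : r ≤ a i)
    (hgap : ∀ k ≠ i, |a k| + 2 * r ≤ a i) (hv : ∀ k, |v k| ≤ r) : a + v ∈ peakCone i := by
  intro k
  have hvi := abs_le.1 (hv i)
  rw [Finsupp.add_apply, Finsupp.add_apply]
  rcases eq_or_ne k i with rfl | hk
  · rw [abs_of_nonneg (by linarith)]
  · linarith [abs_add_le (a k) (v k), hv k, hgap k hk]

lemma peakDefect_sub_le (hT : ∀ a ∈ unitCube ι, ‖T a‖ ≤ 1) {a a' : ι →₀ ℝ} {r σ : ℝ}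
    (hr : 0 < r) (hσ : 0 < σ) (hai : r ≤ a i) (hgap : ∀ k ≠ i, |a k| + 2 * r ≤ a i)
    (hdist : ∀ k, |a k - a' k| ≤ σ) :
    peakDefect T i a' - peakDefect T i a ≤ σ / r * peakDefect T i a := by
  have hcone : a + (r / σ) • (a - a') ∈ peakCone i := add_mem_peakCone hai hgap fun k ↦ by
    rw [Finsupp.smul_apply, Finsupp.sub_apply, smul_eq_mul, abs_mul, abs_of_pos (by positivity),
      div_mul_eq_mul_div, div_le_iff₀ hσ]
    exact mul_le_mul_of_nonneg_left (hdist k) hr.le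
  have hconc := mul_sub_le_of_concaveOn (concaveOn_peakDefect T i) (by positivity : 0 ≤ r / σ)
    (mem_univ a') (mem_univ _) (peakDefect_nonneg hT hcone)
  rw [div_mul_eq_mul_div, div_le_iff₀ hσ] at hconc
  rw [div_mul_eq_mul_div, le_div_iff₀ hr]
  linarith

end PeakDefect

section Equilateral

/-- The coordinates of the `j`-th point of the equilateral set,
`∑ k < j, (1 / 2 + e (k, j)) eₖ - (1 / 2) eⱼ`, as a function of the perturbation `e`. Only the
values of `e` at pairs `k < j` matter. -/
noncomputable def pointCoeff (e : ℕ × ℕ → Icc (0 : ℝ) (1 / 8)) (j : ℕ) : ℕ →₀ ℝ :=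
  Finsupp.onFinset (Finset.range (j + 1))
    (fun k ↦ if k < j then 1 / 2 + e (k, j) else if k = j then -1 / 2 else 0)
    fun k hk ↦ by
      rw [Finset.mem_range]
      by_contra h
      exact hk (by rw [if_neg (by lia), if_neg (by lia)])

variable {e e' : ℕ × ℕ → Icc (0 : ℝ) (1 / 8)} {i j : ℕ}

lemma pointCoeff_apply (e : ℕ × ℕ → Icc (0 : ℝ) (1 / 8)) (j k : ℕ) :
    pointCoeff e j k = if k < j then 1 / 2 + (e (k, j) : ℝ) else if k = j then -1 / 2 else 0 :=
  rfl

lemma pointCoeff_sub_apply_left (e : ℕ × ℕ → Icc (0 : ℝ) (1 / 8)) (hij : i < j) :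
    (pointCoeff e j - pointCoeff e i) i = 1 + e (i, j) := by
  simp only [Finsupp.sub_apply, pointCoeff_apply, hij, lt_irrefl, if_true, if_false]
  ring

lemma abs_pointCoeff_sub_apply_le (e : ℕ × ℕ → Icc (0 : ℝ) (1 / 8)) (hij : i < j) {k : ℕ}
    (hk : k ≠ i) : |(pointCoeff e j - pointCoeff e i) k| ≤ 5 / 8 := by
  obtain ⟨hj0, hj1⟩ := (e (k, j)).2
  obtain ⟨hi0, hi1⟩ := (e (k, i)).2
  rw [Finsupp.sub_apply, pointCoeff_apply, pointCoeff_apply, abs_le]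
  split_ifs <;> first | lia | constructor <;> linarith

lemma pointCoeff_sub_mem_peakCone (e : ℕ × ℕ → Icc (0 : ℝ) (1 / 8)) (hij : i < j) :
    pointCoeff e j - pointCoeff e i ∈ peakCone i := by
  intro k
  have he := (e (i, j)).2.1
  rcases eq_or_ne k i with rfl | hk
  · rw [pointCoeff_sub_apply_left e hij, abs_of_nonneg (by linarith)]
  · rw [pointCoeff_sub_apply_left e hij]
    linarith [abs_pointCoeff_sub_apply_le e hij hk]

lemma abs_pointCoeff_sub_pointCoeff_le {r : ℝ} (hr : 0 ≤ r) (he : ∀ q, dist (e q) (e' q) ≤ r)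
    (j k : ℕ) : |pointCoeff e j k - pointCoeff e' j k| ≤ r := by
  have hkj : |(e (k, j) : ℝ) - e' (k, j)| ≤ r := he (k, j)
  rw [pointCoeff_apply, pointCoeff_apply]
  split_ifs
  · rwa [add_sub_add_left_eq_sub]
  all_goals simpa using hr

variable {X : Type*} [SeminormedAddCommGroup X] [NormedSpace ℝ X] {T : (ℕ →₀ ℝ) →ₗ[ℝ] X}

lemma peakDefect_pointCoeff_sub_mem_Icc (hT : ∀ a ∈ unitCube ℕ, ‖T a‖ ≤ 1)
    (hT1 : ∀ n, 1 - 1 / 100 ≤ ‖T (Finsupp.single n 1)‖) (e : ℕ × ℕ → Icc (0 : ℝ) (1 / 8))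
    (hij : i < j) :
    peakDefect T i (pointCoeff e j - pointCoeff e i) ∈ Icc (0 : ℝ) (1 / 40) := by
  have hcone := pointCoeff_sub_mem_peakCone e hij
  have hle := peakDefect_le hT (hT1 i) hcone
  rw [pointCoeff_sub_apply_left e hij] at hle
  exact ⟨peakDefect_nonneg hT hcone, by linarith [(e (i, j)).2.2]⟩

lemma peakDefect_pointCoeff_sub_sub_le (hT : ∀ a ∈ unitCube ℕ, ‖T a‖ ≤ 1)
    (hT1 : ∀ n, 1 - 1 / 100 ≤ ‖T (Finsupp.single n 1)‖) {r : ℝ} (hr : 0 < r)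
    (he : ∀ q, dist (e q) (e' q) ≤ r) (hij : i < j) :
    peakDefect T i (pointCoeff e' j - pointCoeff e' i) -
      peakDefect T i (pointCoeff e j - pointCoeff e i) ≤ r / 2 := by
  have hpeak := pointCoeff_sub_apply_left e hij
  have he0 := (e (i, j)).2.1
  have hlip := peakDefect_sub_le (i := i) hT (a := pointCoeff e j - pointCoeff e i)
    (a' := pointCoeff e' j - pointCoeff e' i) (r := 1 / 8) (σ := 2 * r) (by norm_num)
    (by positivity) (by linarith)
    (fun k hk ↦ by linarith [abs_pointCoeff_sub_apply_le e hij hk])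
    (fun k ↦ by
      rw [Finsupp.sub_apply, Finsupp.sub_apply, sub_sub_sub_comm, two_mul]
      exact (abs_sub _ _).trans (add_le_add (abs_pointCoeff_sub_pointCoeff_le hr.le he j k)
        (abs_pointCoeff_sub_pointCoeff_le hr.le he i k)))
  have hsmall := (peakDefect_pointCoeff_sub_mem_Icc hT hT1 e hij).2
  nlinarith

lemma exists_norm_map_pointCoeff_sub_eq_one (hT : ∀ a ∈ unitCube ℕ, ‖T a‖ ≤ 1)
    (hT1 : ∀ n, 1 - 1 / 100 ≤ ‖T (Finsupp.single n 1)‖) :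
    ∃ e, ∀ i j, i < j → ‖T (pointCoeff e j - pointCoeff e i)‖ = 1 := by
  have hmem (e : ℕ × ℕ → Icc (0 : ℝ) (1 / 8)) {i j : ℕ} (hij : i < j) :
      peakDefect T i (pointCoeff e j - pointCoeff e i) ∈ Icc (0 : ℝ) (1 / 8) :=
    Icc_subset_Icc_right (by norm_num) (peakDefect_pointCoeff_sub_mem_Icc hT hT1 e hij)
  have hzero : (0 : ℝ) ∈ Icc (0 : ℝ) (1 / 8) := by norm_num
  have : Nonempty (Icc (0 : ℝ) (1 / 8)) := ⟨⟨0, hzero⟩⟩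
  let F (e : ℕ × ℕ → Icc (0 : ℝ) (1 / 8)) (q : ℕ × ℕ) : Icc (0 : ℝ) (1 / 8) :=
    if hq : q.1 < q.2 then ⟨_, hmem e hq⟩ else ⟨0, hzero⟩
  obtain ⟨e, he⟩ := exists_fixedPoint_pi_of_uniform_contraction (K := 1 / 2)
    (NNReal.half_lt_self one_ne_zero) F fun e e' r hr hee' ⟨i, j⟩ ↦ by
      by_cases hij : i < j
      · simp only [F, hij, dif_pos]
        have h := peakDefect_pointCoeff_sub_sub_le hT hT1 hr hee' hij
        have h' := peakDefect_pointCoeff_sub_sub_le hT hT1 hr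
          (fun q ↦ (dist_comm (e' q) (e q)).trans_le (hee' q)) hij
        rw [Subtype.dist_eq, Real.dist_eq, abs_le]
        push_cast
        constructor <;> linarith
      · simp only [F, hij, dif_neg, not_false_eq_true, dist_self]
        positivity
  refine ⟨e, fun i j hij ↦ ?_⟩
  have hfix := congrArg Subtype.val (congrFun he (i, j))
  simp only [F, hij, dif_pos, peakDefect, pointCoeff_sub_apply_left e hij] at hfix
  linarith

end Equilateral

theorem infinite_equilateral_of_c0_subspace_general
    {X : Type*} [SeminormedAddCommGroup X] [NormedSpace ℝ X]
    (T : (ℕ →₀ ℝ) →ₗ[ℝ] X) {C m : ℝ}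
    (hC : ∀ a : ℕ →₀ ℝ, (∀ k, |a k| ≤ 1) → ‖T a‖ ≤ C) (hm : 0 < m)
    (hTm : ∀ n, m ≤ ‖T (Finsupp.single n 1)‖) :
    ∃ S : Set X, S.Infinite ∧ ∃ lam : ℝ, 0 < lam ∧
      ∀ x ∈ S, ∀ y ∈ S, x ≠ y → ‖x - y‖ = lam := by
  obtain ⟨U, hU, hU1⟩ := exists_almost_isometric_of_bounded_below hC hm hTm
    (δ := 1 / 100) (by norm_num)
  obtain ⟨e, he⟩ := exists_norm_map_pointCoeff_sub_eq_one hU hU1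
  let p (j : ℕ) : X := U (pointCoeff e j)
  have hp : Pairwise fun i j ↦ ‖p i - p j‖ = 1 := by
    intro i j hij
    rcases hij.lt_or_gt with h | h
    · rw [norm_sub_rev, ← map_sub, he i j h]
    · rw [← map_sub, he j i h]
  have hinj : Function.Injective p := fun i j hij ↦ by
    by_contra hne
    simpa [hij] using hp hne
  refine ⟨range p, infinite_range_of_injective hinj, 1, one_pos, ?_⟩
  rintro _ ⟨i, rfl⟩ _ ⟨j, rfl⟩ hne
  exact hp fun hij ↦ hne (congrArg p hij)

section C0

variable {ι : Type*} [TopologicalSpace ι] [DiscreteTopology ι]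

/-- The inclusion of `c₀₀(ι)` into `c₀(ι)`. -/
noncomputable def finsuppToC0 : (ι →₀ ℝ) →ₗ[ℝ] C₀(ι, ℝ) where
  toFun a :=
    { toFun := a
      continuous_toFun := continuous_of_discreteTopology
      zero_at_infty' := by
        rw [cocompact_eq_cofinite]
        refine tendsto_const_nhds.congr' ?_
        filter_upwards [a.support.finite_toSet.eventually_cofinite_notMem] with k hk
        exact (Finsupp.notMem_support_iff.1 hk).symm }
  map_add' _ _ := rfl
  map_smul' _ _ := rfl

lemma norm_finsuppToC0_le_iff {a : ι →₀ ℝ} {R : ℝ} (hR : 0 ≤ R) :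
    ‖finsuppToC0 a‖ ≤ R ↔ ∀ k, |a k| ≤ R := by
  rw [← ZeroAtInftyContinuousMap.norm_toBCF_eq_norm, BoundedContinuousFunction.norm_le hR]
  rfl

lemma one_le_norm_finsuppToC0_single (i : ι) :
    1 ≤ ‖finsuppToC0 (Finsupp.single i (1 : ℝ))‖ := by
  simpa using (norm_finsuppToC0_le_iff (norm_nonneg _)).1
    (le_refl ‖finsuppToC0 (Finsupp.single i (1 : ℝ))‖) i

lemma exists_norm_bounds_comp_finsuppToC0 {Y : Type*} [SeminormedAddCommGroup Y] [NormedSpace ℝ Y]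
    (Φ : C₀(ι, ℝ) ≃L[ℝ] Y) :
    ∃ C m : ℝ, 0 < m ∧ (∀ a : ι →₀ ℝ, (∀ k, |a k| ≤ 1) → ‖Φ (finsuppToC0 a)‖ ≤ C) ∧
      ∀ i, m ≤ ‖Φ (finsuppToC0 (Finsupp.single i 1))‖ := by
  obtain ⟨c, hc, hΦ⟩ := (Φ.symm : Y →L[ℝ] C₀(ι, ℝ)).bound
  refine ⟨‖(Φ : C₀(ι, ℝ) →L[ℝ] Y)‖, c⁻¹, inv_pos.2 hc, fun a ha ↦ ?_, fun i ↦ ?_⟩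
  · exact (Φ : C₀(ι, ℝ) →L[ℝ] Y).unit_le_opNorm _ ((norm_finsuppToC0_le_iff zero_le_one).2 ha)
  · rw [inv_le_iff_one_le_mul₀' hc]
    simpa using (one_le_norm_finsuppToC0_single i).trans
      ((hΦ (Φ (finsuppToC0 (Finsupp.single i 1)))).trans_eq' (by simp))

end C0

/-- **Theorem 2.** Every real Banach space containing a closed subspace linearly isomorphic
to `c₀` (the space `C₀(ℕ, ℝ)` of real sequences vanishing at infinity, with the sup norm)
admits an infinite equilateral set. -/
theorem infinite_equilateral_of_c0_subspace
    (X : Type*) [NormedAddCommGroup X] [NormedSpace ℝ X] [CompleteSpace X]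
    (Y : Subspace ℝ X) (hY : IsClosed (Y : Set X)) (hiso : Nonempty (Y ≃L[ℝ] C₀(ℕ, ℝ))) :
    ∃ S : Set X, S.Infinite ∧ ∃ lam : ℝ, 0 < lam ∧
      ∀ x ∈ S, ∀ y ∈ S, x ≠ y → ‖x - y‖ = lam := by
  obtain ⟨Φ⟩ := hiso
  obtain ⟨C, m, hm, hC, hΦm⟩ := exists_norm_bounds_comp_finsuppToC0 Φ.symm
  exact infinite_equilateral_of_c0_subspace_general
    (Y.subtype ∘ₗ Φ.symm.toLinearMap ∘ₗ finsuppToC0) hC hm hΦm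
end

section
/- Let X be a real Banach space containing a closed subspace linearly isomorphic to ℓ₁. Then for every ε > 0 there exist a closed subspace Z of X and a norm |||·||| on Z such that (1/(1+ε))|||z||| ≤ ‖z‖ ≤ |||z||| for all z ∈ Z, the space (Z, |||·|||) is isometrically isomorphic to ℓ₁, and consequently (Z, |||·|||) admits an infinite equilateral set. -/
/-!
Let `T : ℓ¹ → X` be an isomorphic embedding. Among the constants `c` with `c ‖x‖ ≤ ‖T x‖` on the
space of all `x` vanishing on some finite set, take one within a factor `1 + ε` of the supremum.
Outside any larger finite set there are still unit vectors `y` with `‖T y‖ < (1 + ε) c`, and they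
may be taken finitely supported. A sequence of such blocks with disjoint supports spans an isometric
copy of `ℓ¹` on which `c ‖x‖ ≤ ‖T x‖ ≤ (1 + ε) c ‖x‖`: the upper bound is the triangle inequality,
the lower one the choice of `c`. Rescaling `T` on this copy and transporting the `ℓ¹` norm to its
image gives the renormed subspace, and the unit vector basis gives the equilateral set.
-/

open Function Set Filter Topology
open scoped lp

section DisjointSupports

variable {α : Type*} {E : α → Type*} [∀ i, NormedAddCommGroup (E i)]

theorem hasSum_norm_lp_one (f : lp E 1) : HasSum (fun i ↦ ‖f i‖) ‖f‖ := by
  simpa only [ENNReal.toReal_one, Real.rpow_one] using lp.hasSum_norm (p := 1) (by simp) f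

theorem norm_add_lp_one_of_disjoint_support {f g : lp E 1} (h : ∀ i, f i = 0 ∨ g i = 0) :
    ‖f + g‖ = ‖f‖ + ‖g‖ := by
  refine (hasSum_norm_lp_one (f + g)).unique ?_
  convert (hasSum_norm_lp_one f).add (hasSum_norm_lp_one g) using 2 with i
  rcases h i with hi | hi <;> simp [hi]

theorem norm_sum_lp_one_of_disjoint_support {ι : Type*} {f : ι → lp E 1}
    (h : Pairwise fun j k ↦ ∀ i, f j i = 0 ∨ f k i = 0) (s : Finset ι) :
    ‖∑ k ∈ s, f k‖ = ∑ k ∈ s, ‖f k‖ := by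
  classical
  induction s using Finset.induction_on with
  | empty => simp
  | insert k s hk ih =>
    rw [Finset.sum_insert hk, Finset.sum_insert hk, norm_add_lp_one_of_disjoint_support, ih]
    refine fun i ↦ or_iff_not_imp_left.2 fun hki ↦ ?_
    rw [lp.coeFn_sum, Finset.sum_apply]
    exact Finset.sum_eq_zero fun j hj ↦ (h (ne_of_mem_of_not_mem hj hk).symm i).resolve_left hki

theorem norm_single_sub_single_lp_one [DecidableEq α] {i j : α} (hij : i ≠ j) (x : E i) (y : E j) :
    ‖lp.single 1 i x - lp.single 1 j y‖ = ‖x‖ + ‖y‖ := by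
  rw [sub_eq_add_neg, norm_add_lp_one_of_disjoint_support, norm_neg, lp.norm_single zero_lt_one,
    lp.norm_single zero_lt_one]
  intro k
  rcases eq_or_ne k i with rfl | hki
  · exact .inr (by simp [hij])
  · exact .inl (lp.single_apply_ne 1 i x hki)

end DisjointSupports

theorem exists_linearIsometry_hasSum_smul {𝕜 ι E : Type*} [NormedField 𝕜] [NormedAddCommGroup E]
    [NormedSpace 𝕜 E] [CompleteSpace E] {y : ι → E}
    (hy : ∀ (a : ι → 𝕜) (s : Finset ι), ‖∑ k ∈ s, a k • y k‖ = ∑ k ∈ s, ‖a k‖) :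
    ∃ B : ℓ¹(ι, 𝕜) →ₗᵢ[𝕜] E, ∀ a, HasSum (fun k ↦ a k • y k) (B a) := by
  have norm_y : ∀ k, ‖y k‖ = 1 := fun k ↦ by simpa using hy 1 {k}
  have hasSum_tsum (a : ℓ¹(ι, 𝕜)) : HasSum (fun k ↦ a k • y k) (∑' k, a k • y k) :=
    (Summable.of_norm (by
      simpa only [norm_smul, norm_y, mul_one] using (hasSum_norm_lp_one a).summable)).hasSum
  let B : ℓ¹(ι, 𝕜) →ₗ[𝕜] E :=
    { toFun a := ∑' k, a k • y k
      map_add' a b := (hasSum_tsum (a + b)).unique <| by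
        simpa only [lp.coeFn_add, Pi.add_apply, add_smul] using (hasSum_tsum a).add (hasSum_tsum b)
      map_smul' r a := (hasSum_tsum (r • a)).unique <| by
        simpa only [lp.coeFn_smul, Pi.smul_apply, smul_assoc, RingHom.id_apply]
          using (hasSum_tsum a).const_smul r }
  have norm_B (a : ℓ¹(ι, 𝕜)) : ‖B a‖ = ‖a‖ :=
    tendsto_nhds_unique ((hasSum_tsum a).norm.congr (hy a)) (hasSum_norm_lp_one a)
  exact ⟨⟨B, norm_B⟩, hasSum_tsum⟩

theorem exists_lowerBound_nearly_sharp {𝕜 E F ι : Type*} [NontriviallyNormedField 𝕜]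
    [NormedAddCommGroup E] [NormedSpace 𝕜 E] [NormedAddCommGroup F] [NormedSpace 𝕜 F] [Nonempty ι]
    {T : E →L[𝕜] F} {K : NNReal} (hT : AntilipschitzWith K T) {V : ι → Submodule 𝕜 E}
    (hV : ∀ n, V n ≠ ⊥) {ε : ℝ} (hε : 0 < ε) :
    ∃ c > 0, (∃ n, ∀ x ∈ V n, c * ‖x‖ ≤ ‖T x‖) ∧
      ∀ n, ∃ x ∈ V n, ‖T x‖ < (1 + ε) * c * ‖x‖ := by
  let lowerConstants : Set ℝ := {c | ∃ n, ∀ x ∈ V n, c * ‖x‖ ≤ ‖T x‖}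
  obtain ⟨c₀, hc₀, hTc₀⟩ : ∃ c₀ > 0, ∀ x, c₀ * ‖x‖ ≤ ‖T x‖ :=
    antilipschitzWith_iff_exists_mul_le_norm.1 ⟨K, hT⟩
  have c₀_mem : c₀ ∈ lowerConstants := ⟨Classical.arbitrary ι, fun x _ ↦ hTc₀ x⟩
  have bdd : BddAbove lowerConstants := by
    refine ⟨‖T‖, fun c ⟨n, hc⟩ ↦ ?_⟩
    obtain ⟨x, hxV, hx⟩ := (V n).exists_mem_ne_zero_of_ne_bot (hV n)
    exact le_of_mul_le_mul_right ((hc x hxV).trans (T.le_opNorm x)) (norm_pos_iff.2 hx)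
  have sSup_pos : 0 < sSup lowerConstants := hc₀.trans_le (le_csSup bdd c₀_mem)
  obtain ⟨c, hc, hlt⟩ : ∃ c ∈ lowerConstants, sSup lowerConstants / (1 + ε) < c :=
    exists_lt_of_lt_csSup ⟨c₀, c₀_mem⟩ (div_lt_self sSup_pos (by linarith))
  have not_mem : (1 + ε) * c ∉ lowerConstants := fun h ↦
    (le_csSup bdd h).not_gt ((div_lt_iff₀' (by linarith)).1 hlt)
  refine ⟨c, (div_pos sSup_pos (by linarith)).trans hlt, hc, ?_⟩
  simpa only [lowerConstants, mem_ofPred_eq, not_exists, not_forall, not_le, exists_prop]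
    using not_mem

/-- The subspace of `lp E p` of the families vanishing on `s`. For finite `s` it plays the role of a
tail subspace `{x | x i = 0 for i < n}`, without an order on the index set. -/
def lpVanishingOn (𝕜 : Type*) {α : Type*} (E : α → Type*) [NormedRing 𝕜]
    [∀ i, NormedAddCommGroup (E i)] [∀ i, Module 𝕜 (E i)] [∀ i, IsBoundedSMul 𝕜 (E i)]
    (p : ENNReal) (s : Set α) : Submodule 𝕜 (lp E p) where
  carrier := {x | ∀ i ∈ s, x i = 0}
  zero_mem' := fun _ _ ↦ rfl
  add_mem' hx hy i hi := by simp [hx i hi, hy i hi]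
  smul_mem' c x hx i hi := by simp [hx i hi]

theorem lpVanishingOn_ne_bot {𝕜 α : Type*} [NormedField 𝕜] [Infinite α] (p : ENNReal)
    (s : Finset α) : lpVanishingOn 𝕜 (fun _ : α ↦ 𝕜) p s ≠ ⊥ := by
  classical
  obtain ⟨j, hj⟩ := Infinite.exists_notMem_finset s
  refine (Submodule.ne_bot_iff _).2 ⟨lp.single p j 1, fun i hi ↦ ?_, fun h ↦ ?_⟩
  · exact lp.single_apply_ne p j 1 (ne_of_mem_of_not_mem hi hj)
  · simpa using congrArg (fun x : lp (fun _ : α ↦ 𝕜) p ↦ x j) h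

section Blocks

variable {𝕜 α F : Type*} {E : α → Type*} [RCLike 𝕜] [∀ i, NormedAddCommGroup (E i)]
  [∀ i, NormedSpace 𝕜 (E i)] [NormedAddCommGroup F] [NormedSpace 𝕜 F] {p : ENNReal} [Fact (1 ≤ p)]

theorem exists_finite_support_unit_of_norm_lt (hp : p ≠ ⊤) (T : lp E p →L[𝕜] F) {M : ℝ}
    {s : Set α} {x : lp E p} (hxs : x ∈ lpVanishingOn 𝕜 E p s) (hx : ‖T x‖ < M * ‖x‖) :
    ∃ y ∈ lpVanishingOn 𝕜 E p s, {i | y i ≠ 0}.Finite ∧ ‖y‖ = 1 ∧ ‖T y‖ < M := by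
  classical
  have isOpen_norm_lt : IsOpen {z : lp E p | ‖T z‖ < M * ‖z‖} :=
    isOpen_lt (by fun_prop) (by fun_prop)
  obtain ⟨t, ht⟩ : ∃ t : Finset α, ‖T (∑ i ∈ t, lp.single p i (x i))‖ <
      M * ‖∑ i ∈ t, lp.single p i (x i)‖ :=
    ((lp.hasSum_single hp x).eventually (isOpen_norm_lt.mem_nhds hx)).exists
  set z : lp E p := ∑ i ∈ t, lp.single p i (x i) with hz
  have z_apply (i : α) : z i = if i ∈ t then x i else 0 := by
    simp only [hz, lp.coeFn_sum, Finset.sum_apply, lp.coeFn_single, Finset.sum_pi_single]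
  have z_mem : z ∈ lpVanishingOn 𝕜 E p s := fun i hi ↦ by rw [z_apply, hxs i hi, ite_self]
  have z_ne : z ≠ 0 := fun h ↦ by simp [h] at ht
  refine ⟨(‖z‖⁻¹ : 𝕜) • z, Submodule.smul_mem _ _ z_mem, t.finite_toSet.subset fun i hi ↦ ?_,
    norm_smul_inv_norm z_ne, ?_⟩
  · by_contra hit
    exact hi (by simp [z_apply i, show i ∉ t from hit])
  · rw [map_smul, norm_smul, norm_inv, RCLike.norm_coe_norm,
      inv_mul_lt_iff₀' (norm_pos_iff.2 z_ne)]
    exact ht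

theorem exists_seq_disjoint_support_unit (hp : p ≠ ⊤) (T : lp E p →L[𝕜] F) {M : ℝ}
    (hM : ∀ s : Finset α, ∃ x ∈ lpVanishingOn 𝕜 E p s, ‖T x‖ < M * ‖x‖) (s : Finset α) :
    ∃ y : ℕ → lp E p, (∀ k, y k ∈ lpVanishingOn 𝕜 E p s ∧ ‖y k‖ = 1 ∧ ‖T (y k)‖ < M) ∧
      Pairwise fun j k ↦ ∀ i, y j i = 0 ∨ y k i = 0 := by
  classical
  let IsBlock (x : lp E p) : Prop :=
    {i | x i ≠ 0}.Finite ∧ x ∈ lpVanishingOn 𝕜 E p s ∧ ‖x‖ = 1 ∧ ‖T x‖ < M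
  let DisjointSupport (x y : lp E p) : Prop := ∀ i, x i = 0 ∨ y i = 0
  have : Std.Symm DisjointSupport := ⟨fun _ _ h i ↦ (h i).symm⟩
  obtain ⟨y, hy, hdisj⟩ := exists_seq_of_forall_finset_exists' IsBlock DisjointSupport <| by
    intro A hA
    have finite_used : (⋃ x ∈ A, {i | x i ≠ 0}).Finite :=
      A.finite_toSet.biUnion fun x hx ↦ (hA x hx).1
    obtain ⟨x, hx, hTx⟩ := hM (s ∪ finite_used.toFinset)
    obtain ⟨y, hy, hfin, hnorm, hTy⟩ := exists_finite_support_unit_of_norm_lt hp T hx hTx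
    refine ⟨y, ⟨hfin, fun i hi ↦ hy i (Finset.mem_union_left _ hi), hnorm, hTy⟩, fun x hxA i ↦ ?_⟩
    refine or_iff_not_imp_left.2 fun hxi ↦ hy i ?_
    exact Finset.mem_union_right _ (finite_used.mem_toFinset.2 (mem_biUnion hxA hxi))
  exact ⟨y, fun k ↦ (hy k).2, hdisj⟩

end Blocks

section NonDistortion

variable {𝕜 α F : Type*} [RCLike 𝕜] [Infinite α] [NormedAddCommGroup F] [NormedSpace 𝕜 F]

theorem exists_linearIsometry_norm_comp_bounds {T : ℓ¹(α, 𝕜) →L[𝕜] F} {K : NNReal}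
    (hT : AntilipschitzWith K T) {ε : ℝ} (hε : 0 < ε) :
    ∃ B : ℓ¹(ℕ, 𝕜) →ₗᵢ[𝕜] ℓ¹(α, 𝕜), ∃ c > 0,
      ∀ a, c * ‖a‖ ≤ ‖T (B a)‖ ∧ ‖T (B a)‖ ≤ (1 + ε) * c * ‖a‖ := by
  obtain ⟨c, hc, ⟨s, lower⟩, upper⟩ := exists_lowerBound_nearly_sharp hT
    (V := fun s : Finset α ↦ lpVanishingOn 𝕜 (fun _ : α ↦ 𝕜) 1 s) (lpVanishingOn_ne_bot 1) hε
  obtain ⟨y, hy, hdisj⟩ := exists_seq_disjoint_support_unit ENNReal.one_ne_top T upper s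
  obtain ⟨B, hB⟩ : ∃ B : ℓ¹(ℕ, 𝕜) →ₗᵢ[𝕜] ℓ¹(α, 𝕜), ∀ a, HasSum (fun k ↦ a k • y k) (B a) := by
    refine exists_linearIsometry_hasSum_smul fun a t ↦ ?_
    rw [norm_sum_lp_one_of_disjoint_support fun j k hjk i ↦ (hdisj hjk i).imp
      (fun h ↦ by simp [h]) (fun h ↦ by simp [h])]
    simp only [norm_smul, (hy _).2.1, mul_one]
  refine ⟨B, c, hc, fun a ↦ ⟨?_, ?_⟩⟩
  · have B_mem : B a ∈ lpVanishingOn 𝕜 (fun _ : α ↦ 𝕜) 1 (s : Set α) := fun i hi ↦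
      ((hB a).mapL (lp.evalCLM 𝕜 (fun _ : α ↦ 𝕜) 1 i)).unique <| by
        simp [lp.evalCLM, (hy _).1 i hi, hasSum_zero]
    simpa only [B.norm_map] using lower (B a) B_mem
  · refine ((hB a).mapL T).norm_le_of_bounded
      ((hasSum_norm_lp_one a).mul_left ((1 + ε) * c)) fun k ↦ ?_
    rw [map_smul, norm_smul, mul_comm]
    gcongr
    exact (hy k).2.2.le

/-- James' non-distortion theorem for `ℓ¹`. -/
theorem exists_almost_isometric_lp_one {T : ℓ¹(α, 𝕜) →L[𝕜] F} {K : NNReal}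
    (hT : AntilipschitzWith K T) {ε : ℝ} (hε : 0 < ε) :
    ∃ S : ℓ¹(ℕ, 𝕜) →L[𝕜] F, ∀ a, 1 / (1 + ε) * ‖a‖ ≤ ‖S a‖ ∧ ‖S a‖ ≤ ‖a‖ := by
  obtain ⟨B, c, hc, hB⟩ := exists_linearIsometry_norm_comp_bounds hT hε
  have M_pos : 0 < (1 + ε) * c := by positivity
  refine ⟨(((1 + ε) * c : ℝ) : 𝕜)⁻¹ • T.comp B.toContinuousLinearMap, fun a ↦ ?_⟩
  have norm_S : ‖((((1 + ε) * c : ℝ) : 𝕜)⁻¹ • T.comp B.toContinuousLinearMap) a‖ =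
      ((1 + ε) * c)⁻¹ * ‖T (B a)‖ := by
    rw [smul_apply, norm_smul, norm_inv, RCLike.norm_of_nonneg M_pos.le]
    rfl
  rw [norm_S, le_inv_mul_iff₀ M_pos, inv_mul_le_iff₀ M_pos]
  refine ⟨?_, (hB a).2⟩
  calc (1 + ε) * c * (1 / (1 + ε) * ‖a‖) = c * ‖a‖ := by field_simp
    _ ≤ ‖T (B a)‖ := (hB a).1

end NonDistortion

theorem isClosed_range_and_exists_linearEquiv_of_bounds {𝕜 E F : Type*} [NormedField 𝕜]
    [NormedAddCommGroup E] [NormedSpace 𝕜 E] [CompleteSpace E] [NormedAddCommGroup F]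
    [NormedSpace 𝕜 F] {S : E →L[𝕜] F} {c C : ℝ} (hc : 0 < c)
    (hS : ∀ a, c * ‖a‖ ≤ ‖S a‖ ∧ ‖S a‖ ≤ C * ‖a‖) :
    IsClosed (S.range : Set F) ∧
      ∃ e : S.range ≃ₗ[𝕜] E, ∀ z, c * ‖e z‖ ≤ ‖z‖ ∧ ‖z‖ ≤ C * ‖e z‖ := by
  have antilipschitz : AntilipschitzWith (Real.toNNReal c⁻¹) S :=
    S.antilipschitz_of_bound fun a ↦ by
      rw [Real.coe_toNNReal _ (inv_nonneg.2 hc.le), le_inv_mul_iff₀ hc]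
      exact (hS a).1
  let e := (LinearEquiv.ofInjective (S : E →ₗ[𝕜] F) antilipschitz.injective).symm
  have S_e (z : S.range) : S (e z) = z := congrArg Subtype.val (e.symm_apply_apply z)
  refine ⟨antilipschitz.isClosed_range S.uniformContinuous, e, fun z ↦ ?_⟩
  simpa only [S_e, Submodule.coe_norm] using hS (e z)

theorem isNorm_norm_comp {Z E : Type*} [AddCommGroup Z] [Module ℝ Z] [NormedAddCommGroup E]
    [NormedSpace ℝ E] {f : Z →ₗ[ℝ] E} (hf : Injective f) : IsNorm fun z ↦ ‖f z‖ := by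
  refine ⟨fun z ↦ by rw [norm_eq_zero, map_eq_zero_iff f hf], fun a z ↦ ?_, fun z w ↦ ?_⟩
  · simp only [map_smul, norm_smul, Real.norm_eq_abs]
  · simpa only [map_add] using norm_add_le (f z) (f w)

theorem exists_infinite_equilateral_lp_one (α 𝕜 : Type*) [NormedField 𝕜] [Infinite α] :
    ∃ S : Set ℓ¹(α, 𝕜), S.Infinite ∧ ∀ x ∈ S, ∀ y ∈ S, x ≠ y → ‖x - y‖ = 2 := by
  classical
  let basisVector (i : α) : ℓ¹(α, 𝕜) := lp.single 1 i 1
  have norm_sub {i j : α} (hij : i ≠ j) : ‖basisVector i - basisVector j‖ = 2 := by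
    rw [norm_single_sub_single_lp_one hij, norm_one, one_add_one_eq_two]
  have injective : Injective basisVector := fun i j h ↦ by
    by_contra hij
    simpa [h] using norm_sub hij
  refine ⟨range basisVector, infinite_range_of_injective injective, ?_⟩
  rintro _ ⟨i, rfl⟩ _ ⟨j, rfl⟩ hne
  exact norm_sub fun hij ↦ hne (congrArg basisVector hij)

theorem l1_subspace_renorm_isometric_l1_general {X α : Type*} [NormedAddCommGroup X]
    [NormedSpace ℝ X] [Infinite α] (Y : Subspace ℝ X) (hiso : Nonempty (Y ≃L[ℝ] ℓ¹(α, ℝ)))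
    {ε : ℝ} (hε : 0 < ε) :
    ∃ Z : Subspace ℝ X, IsClosed (Z : Set X) ∧
      ∃ N : Z → ℝ, IsNorm N ∧
        (∀ z : Z, (1 / (1 + ε)) * N z ≤ ‖z‖ ∧ ‖z‖ ≤ N z) ∧
        (∃ e : Z ≃ₗ[ℝ] ℓ¹(ℕ, ℝ), ∀ z : Z, N z = ‖e z‖) ∧
        (∃ S : Set Z, S.Infinite ∧ ∃ lam : ℝ, 0 < lam ∧
          ∀ x ∈ S, ∀ y ∈ S, x ≠ y → N (x - y) = lam) := by
  obtain ⟨T⟩ := hiso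
  have antilipschitz := Y.subtypeₗᵢ.antilipschitz.comp T.symm.antilipschitz
  obtain ⟨S, hS⟩ := exists_almost_isometric_lp_one
    (T := Y.subtypeL.comp (T.symm : ℓ¹(α, ℝ) →L[ℝ] Y)) antilipschitz hε
  obtain ⟨isClosed_range, e, he⟩ := isClosed_range_and_exists_linearEquiv_of_bounds (S := S)
    (c := 1 / (1 + ε)) (C := 1) (by positivity) (by simpa only [one_mul] using hS)
  obtain ⟨A, hA, equilateral⟩ := exists_infinite_equilateral_lp_one ℕ ℝ
  refine ⟨S.range, isClosed_range, fun z ↦ ‖e z‖, isNorm_norm_comp (f := e.toLinearMap) e.injective,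
    by simpa only [one_mul] using he, ⟨e, fun _ ↦ rfl⟩, e.symm '' A,
    hA.image e.symm.injective.injOn, 2, two_pos, ?_⟩
  rintro _ ⟨x, hx, rfl⟩ _ ⟨y, hy, rfl⟩ hne
  simpa only [map_sub, e.apply_symm_apply] using equilateral x hx y hy (ne_of_apply_ne _ hne)

/-- If the real Banach space `X` contains a closed subspace linearly isomorphic to `ℓ₁`,
then for every `ε > 0` there are a closed subspace `Z` of `X` and a norm `N` on `Z` with
`(1/(1+ε)) * N z ≤ ‖z‖ ≤ N z` for all `z ∈ Z`, such that `(Z, N)` is isometrically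
isomorphic to `ℓ₁`, and consequently `(Z, N)` admits an infinite equilateral set. -/
theorem l1_subspace_renorm_isometric_l1
    (X : Type*) [NormedAddCommGroup X] [NormedSpace ℝ X] [CompleteSpace X]
    (Y : Subspace ℝ X) (hY : IsClosed (Y : Set X))
    (hiso : Nonempty (Y ≃L[ℝ] lp (fun _ : ℕ => ℝ) 1))
    {ε : ℝ} (hε : 0 < ε) :
    ∃ Z : Subspace ℝ X, IsClosed (Z : Set X) ∧
      ∃ N : Z → ℝ, IsNorm N ∧
        (∀ z : Z, (1 / (1 + ε)) * N z ≤ ‖z‖ ∧ ‖z‖ ≤ N z) ∧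
        (∃ e : Z ≃ₗ[ℝ] lp (fun _ : ℕ => ℝ) 1, ∀ z : Z, N z = ‖e z‖) ∧
        (∃ S : Set Z, S.Infinite ∧ ∃ lam : ℝ, 0 < lam ∧
          ∀ x ∈ S, ∀ y ∈ S, x ≠ y → N (x - y) = lam) :=
  l1_subspace_renorm_isometric_l1_general Y hiso hε
end

section
/- Let S be an equilateral set in a real normed space (X, ‖·‖). Then S is antipodal: for every x, y ∈ S with x ≠ y there exists f ∈ X* such that f(x) < f(y) and f(x) ≤ f(z) ≤ f(y) for all z ∈ S. -/
/-!
By Hahn–Banach there is a functional `f` of norm at most `1` which attains the norm of `y - x`. It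
increases by exactly `dist x y` from `x` to `y`, but varies by at most `dist x y` between the centre
of a closed ball of that radius and any other point of it. So `f` is at least `f x` on the ball
around `y` and at most `f y` on the ball around `x`. An equilateral set lies in both balls.
-/

open Metric

theorem subset_closedBall_of_forall_ne_dist_le {α : Type*} [PseudoMetricSpace α] {S : Set α} {x : α}
    {r : ℝ} (hr : 0 ≤ r) (h : ∀ z ∈ S, z ≠ x → dist z x ≤ r) : S ⊆ closedBall x r := by
  intro z hz
  obtain rfl | hzx := eq_or_ne z x
  · exact mem_closedBall_self hr
  · exact h z hz hzx

section Seminormed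

variable {X : Type*} [SeminormedAddCommGroup X] [NormedSpace ℝ X]

theorem exists_lipschitzWith_one_sub_eq_dist (x y : X) :
    ∃ f : X →L[ℝ] ℝ, LipschitzWith 1 f ∧ f y - f x = dist x y := by
  obtain ⟨f, hf, hfxy⟩ := exists_dual_vector'' ℝ (y - x)
  refine ⟨f, f.lipschitz.weaken hf, ?_⟩
  rw [← map_sub, hfxy, RCLike.ofReal_real_eq_id, id, dist_eq_norm']

theorem equilateral_antipodal_general {S : Set X} {x y : X} (hxy : 0 < dist x y)
    (hx : S ⊆ closedBall x (dist x y)) (hy : S ⊆ closedBall y (dist x y)) :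
    ∃ f : X →L[ℝ] ℝ, f x < f y ∧ ∀ z ∈ S, f x ≤ f z ∧ f z ≤ f y := by
  obtain ⟨f, hf, hfxy⟩ := exists_lipschitzWith_one_sub_eq_dist x y
  refine ⟨f, sub_pos.mp (hfxy ▸ hxy), fun z hz ↦ ⟨?_, ?_⟩⟩
  · have hyz : f y ≤ f z + dist y z := by simpa using hf.le_add_mul y z
    linarith [mem_closedBall'.mp (hy hz)]
  · have hzx : f z ≤ f x + dist z x := by simpa using hf.le_add_mul z x
    linarith [mem_closedBall.mp (hx hz)]

end Seminormed

/-- **Proposition 2.** Every equilateral set `S` in a real normed space is antipodal: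
for every `x, y ∈ S` with `x ≠ y` there is a continuous functional `f` with
`f x < f y` and `f x ≤ f z ≤ f y` for all `z ∈ S`. -/
theorem equilateral_antipodal
    (X : Type*) [NormedAddCommGroup X] [NormedSpace ℝ X]
    (S : Set X) {lam : ℝ} (hlam : 0 < lam)
    (heq : ∀ x ∈ S, ∀ y ∈ S, x ≠ y → ‖x - y‖ = lam) :
    ∀ x ∈ S, ∀ y ∈ S, x ≠ y →
      ∃ f : X →L[ℝ] ℝ, f x < f y ∧ ∀ z ∈ S, f x ≤ f z ∧ f z ≤ f y := by
  simp only [← dist_eq_norm] at heq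
  intro x hx y hy hxy
  obtain rfl := heq x hx y hy hxy
  have hball : ∀ w ∈ S, S ⊆ closedBall w (dist x y) := fun w hw ↦
    subset_closedBall_of_forall_ne_dist_le hlam.le fun z hz hzw ↦ (heq z hz w hw hzw).le
  exact equilateral_antipodal_general hlam (hball x hx) (hball y hy)
end

section
/- Let (X, ‖·‖) be a real Banach space and let S ⊆ X be a bounded and separated antipodal set with constants c₁ = 1, c₂ = c and d. Then there is an equivalent norm |||·||| on X such that S is an equilateral set in (X, |||·|||), and moreover the Banach–Mazur distance between (X, ‖·‖) and (X, |||·|||) is at most 2c/d. -/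
/-- `S` is a bounded and separated antipodal set with constants `c₁, c₂, d`. -/
def BddSepAntipodal {X : Type*} [NormedAddCommGroup X] [NormedSpace ℝ X]
    (S : Set X) (c₁ c₂ d : ℝ) : Prop :=
  (∀ x ∈ S, ‖x‖ ≤ c₁) ∧
  ∀ x ∈ S, ∀ y ∈ S, x ≠ y → ∃ f : X →L[ℝ] ℝ, ‖f‖ ≤ c₂ ∧ d ≤ f y - f x ∧
    ∀ z ∈ S, f x ≤ f z ∧ f z ≤ f y

/-! The new unit ball is the convex hull of `S - S` and the closed ball of radius `d / c₂`. It
contains that ball and lies in the ball of radius `2 * c₁`, which bounds the distance to the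
original norm. A difference `x - y` of distinct points of `S` has gauge at most `1` because it lies
in `S - S`, and at least `1` because the functional `f` separating `y` from `x` attains its maximum
over this hull at `x - y`: on `S - S` this is antipodality, and on the ball `f ≤ d ≤ f (x - y)`. -/

open Metric
open scoped Pointwise

section Gauge

variable {E : Type*} [AddCommGroup E] [Module ℝ E] {s : Set E}

theorem isNorm_gauge [TopologicalSpace E] [T1Space E] (hconv : Convex ℝ s) (hbal : Balanced ℝ s)
    (habs : Absorbent ℝ s) (hbdd : Bornology.IsVonNBounded ℝ s) : IsNorm (gauge s) :=
  ⟨fun _ => gauge_eq_zero habs hbdd, gauge_smul hbal, gauge_add_le hconv habs⟩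

theorem one_le_gauge_of_forall_le (habs : Absorbent ℝ s) (f : E →ₗ[ℝ] ℝ) {x : E}
    (hpos : 0 < f x) (hmax : ∀ y ∈ s, f y ≤ f x) : 1 ≤ gauge s x := by
  by_contra! hlt
  obtain ⟨t, ht0, ht1, y, hy, rfl⟩ := exists_lt_of_gauge_lt habs hlt
  have : f (t • y) < f (t • y) := calc
    f (t • y) = t * f y := by simp
    _ ≤ t * f (t • y) := by gcongr; exact hmax y hy
    _ < f (t • y) := mul_lt_of_lt_one_left hpos ht1
  exact this.false

end Gauge

section DifferenceBody

variable {X : Type*} [SeminormedAddCommGroup X] [NormedSpace ℝ X] {S : Set X} {r R : ℝ}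

/-- The convex hull of `S - S` and the closed ball of radius `r` about the origin. Its gauge is the
norm in which an antipodal set `S` becomes equilateral; the ball is included because `S - S` need
not have the origin in the interior of its convex hull. -/
def differenceBody (S : Set X) (r : ℝ) : Set X :=
  convexHull ℝ ((S - S) ∪ closedBall 0 r)

theorem convex_differenceBody : Convex ℝ (differenceBody S r) :=
  convex_convexHull ℝ _

theorem balanced_differenceBody : Balanced ℝ (differenceBody S r) := by
  refine (balanced_iff_neg_mem convex_differenceBody).2 fun x hx => ?_
  rw [differenceBody, ← Set.mem_neg, ← convexHull_neg]
  simpa [differenceBody] using hx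

theorem sub_mem_differenceBody {x y : X} (hx : x ∈ S) (hy : y ∈ S) :
    x - y ∈ differenceBody S r :=
  subset_convexHull ℝ _ (.inl (Set.sub_mem_sub hx hy))

theorem closedBall_subset_differenceBody : closedBall 0 r ⊆ differenceBody S r :=
  Set.subset_union_right.trans (subset_convexHull ℝ _)

theorem absorbent_differenceBody (hr : 0 < r) : Absorbent ℝ (differenceBody S r) :=
  absorbent_nhds_zero <|
    Filter.mem_of_superset (closedBall_mem_nhds 0 hr) closedBall_subset_differenceBody

theorem differenceBody_subset_closedBall (hS : S - S ⊆ closedBall 0 R) (hr : r ≤ R) :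
    differenceBody S r ⊆ closedBall 0 R :=
  convexHull_min (Set.union_subset hS (closedBall_subset_closedBall hr)) (convex_closedBall 0 R)

theorem le_of_mem_differenceBody (f : X →ₗ[ℝ] ℝ) {a : ℝ} (hS : ∀ z ∈ S, ∀ w ∈ S, f z - f w ≤ a)
    (hball : ∀ u ∈ closedBall 0 r, f u ≤ a) {u : X} (hu : u ∈ differenceBody S r) : f u ≤ a := by
  have hhull : (S - S) ∪ closedBall 0 r ⊆ {u | f u ≤ a} := by
    refine Set.union_subset (Set.sub_subset_iff.2 fun z hz w hw => ?_) hball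
    simpa using hS z hz w hw
  exact convexHull_min hhull (convex_halfSpace_le f.isLinear a) hu

end DifferenceBody

theorem isNorm_gauge_differenceBody {X : Type*} [NormedAddCommGroup X] [NormedSpace ℝ X]
    {S : Set X} {r : ℝ} (hr : 0 < r) (hS : Bornology.IsBounded (S - S)) :
    IsNorm (gauge (differenceBody S r)) :=
  isNorm_gauge convex_differenceBody balanced_differenceBody (absorbent_differenceBody hr) <|
    NormedSpace.isVonNBounded_of_isBounded ℝ <|
      isBounded_convexHull.2 (hS.union isBounded_closedBall)

namespace BddSepAntipodal

variable {X : Type*} [NormedAddCommGroup X] [NormedSpace ℝ X] {S : Set X} {c₁ c₂ d : ℝ} {x y : X}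

theorem sub_subset_closedBall (h : BddSepAntipodal S c₁ c₂ d) :
    S - S ⊆ closedBall 0 (2 * c₁) := by
  refine Set.sub_subset_iff.2 fun x hx y hy => ?_
  simpa [two_mul] using norm_sub_le_of_le (h.1 x hx) (h.1 y hy)

theorem le_mul_norm_sub (h : BddSepAntipodal S c₁ c₂ d) (hx : x ∈ S) (hy : y ∈ S) (hxy : x ≠ y) :
    d ≤ c₂ * ‖x - y‖ := by
  obtain ⟨f, hf, hd, -⟩ := h.2 y hy x hx hxy.symm
  calc
    d ≤ f (x - y) := by simpa using hd
    _ ≤ ‖f (x - y)‖ := Real.le_norm_self _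
    _ ≤ c₂ * ‖x - y‖ := f.le_of_opNorm_le hf _

theorem gauge_differenceBody_sub (h : BddSepAntipodal S c₁ c₂ d) (hd : 0 < d) {r : ℝ} (hr : 0 < r)
    (hrd : c₂ * r ≤ d) (hx : x ∈ S) (hy : y ∈ S) (hxy : x ≠ y) :
    gauge (differenceBody S r) (x - y) = 1 := by
  obtain ⟨f, hf, hsep, hanti⟩ := h.2 y hy x hx hxy.symm
  have hfS : ∀ z ∈ S, ∀ w ∈ S, f z - f w ≤ f x - f y := fun z hz w hw =>
    sub_le_sub (hanti z hz).2 (hanti w hw).1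
  have hfball : ∀ u ∈ closedBall 0 r, f u ≤ f x - f y := fun u hu => calc
    f u ≤ ‖f u‖ := Real.le_norm_self _
    _ ≤ c₂ * r := f.le_of_opNorm_le_of_le hf (mem_closedBall_zero_iff.1 hu)
    _ ≤ f x - f y := hrd.trans hsep
  refine le_antisymm (gauge_le_one_of_mem (sub_mem_differenceBody hx hy)) ?_
  refine one_le_gauge_of_forall_le (absorbent_differenceBody hr) (f : X →ₗ[ℝ] ℝ) ?_ fun u hu => ?_
  · simpa using hd.trans_le hsep
  · simpa using le_of_mem_differenceBody (f : X →ₗ[ℝ] ℝ) hfS hfball hu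

end BddSepAntipodal

theorem antipodal_renorm_equilateral_general
    (X : Type*) [NormedAddCommGroup X] [NormedSpace ℝ X]
    (S : Set X) (hS : S.Nontrivial) {c₁ c₂ d : ℝ} (hd : 0 < d)
    (hant : BddSepAntipodal S c₁ c₂ d) :
    ∃ N : X → ℝ, IsNorm N ∧
      (∃ a b : ℝ, 0 < a ∧ 0 < b ∧ (∀ x, a * N x ≤ ‖x‖ ∧ ‖x‖ ≤ b * N x) ∧
        b / a ≤ 2 * c₁ * c₂ / d) ∧
      (∃ lam : ℝ, 0 < lam ∧ ∀ x ∈ S, ∀ y ∈ S, x ≠ y → N (x - y) = lam) := by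
  obtain ⟨x₀, hx₀, y₀, hy₀, hne⟩ := hS
  have hdist : d ≤ c₂ * ‖x₀ - y₀‖ := hant.le_mul_norm_sub hx₀ hy₀ hne
  have hc₂ : 0 < c₂ := pos_of_mul_pos_left (hd.trans_le hdist) (norm_nonneg _)
  have hr : 0 < d / c₂ := div_pos hd hc₂
  have hrR : d / c₂ ≤ 2 * c₁ := ((div_le_iff₀' hc₂).2 hdist).trans <|
    mem_closedBall_zero_iff.1 (hant.sub_subset_closedBall (Set.sub_mem_sub hx₀ hy₀))
  have hR : 0 < 2 * c₁ := hr.trans_le hrR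
  refine ⟨gauge (differenceBody S (d / c₂)),
    isNorm_gauge_differenceBody hr (isBounded_closedBall.subset hant.sub_subset_closedBall),
    ⟨d / c₂, 2 * c₁, hr, hR, fun x => ⟨?_, ?_⟩, (div_div_eq_mul_div _ _ _).le⟩,
    1, one_pos, fun x hx y hy hxy =>
      hant.gauge_differenceBody_sub hd hr (mul_div_cancel₀ d hc₂.ne').le hx hy hxy⟩
  · exact mul_gauge_le_norm (ball_subset_closedBall.trans closedBall_subset_differenceBody)
  · exact (div_le_iff₀' hR).1 <| le_gauge_of_subset_closedBall (absorbent_differenceBody hr) hR.le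
      (differenceBody_subset_closedBall hant.sub_subset_closedBall hrR)

/-- **Theorem 3.** If `S` is a bounded and separated antipodal set in a real Banach space
`X` with constants `c₁ = 1`, `c₂ = c` and `d`, then `X` admits an equivalent norm `N` in
which `S` is equilateral, and the Banach–Mazur distance of the two norms is at most
`2c/d` (witnessed by the identity: `a * N x ≤ ‖x‖ ≤ b * N x` with `b / a ≤ 2c/d`). -/
theorem antipodal_renorm_equilateral
    (X : Type*) [NormedAddCommGroup X] [NormedSpace ℝ X] [CompleteSpace X]
    (S : Set X) (hS : S.Nontrivial) {c d : ℝ} (hc : 0 < c) (hd : 0 < d)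
    (hant : BddSepAntipodal S 1 c d) :
    ∃ N : X → ℝ, IsNorm N ∧
      (∃ a b : ℝ, 0 < a ∧ 0 < b ∧ (∀ x, a * N x ≤ ‖x‖ ∧ ‖x‖ ≤ b * N x) ∧
        b / a ≤ 2 * c / d) ∧
      (∃ lam : ℝ, 0 < lam ∧ ∀ x ∈ S, ∀ y ∈ S, x ≠ y → N (x - y) = lam) := by
  simpa using antipodal_renorm_equilateral_general X S hS hd hant
end

section
/- Let {(x_γ, x*_γ) : γ ∈ Γ} be a biorthogonal system in a real Banach space (X, ‖·‖) with ‖x_γ‖ = 1 and ‖x*_γ‖ ≤ c for all γ ∈ Γ. Then there exists an equivalent norm |||·||| on X of Banach–Mazur distance at most 2c from ‖·‖ such that {x_γ : γ ∈ Γ} is an equilateral set in (X, |||·|||). -/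
/-!
The new norm is `N z = max (‖z‖ / 2) (sup_γ |x*_γ z|)`. It satisfies `‖z‖ / 2 ≤ N z ≤ c ‖z‖`, where
`1 ≤ c` because `x*_γ (x_γ) = 1`. On a difference `x_α - x_β` with `α ≠ β`, the functionals take
only the values `1`, `-1` and `0`, and `1` is attained at `γ = α`, while the factor `1 / 2` keeps
the first term of the maximum at most `1`; so `N (x_α - x_β) = 1`.
-/

theorem IsNorm.of_seminorm {X : Type*} [AddCommGroup X] [Module ℝ X] (p : Seminorm ℝ X)
    (hp : ∀ z, p z = 0 → z = 0) : IsNorm p :=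
  ⟨fun z => ⟨hp z, fun hz => hz ▸ map_zero p⟩, fun a z => map_smul_eq_mul p a z, map_add_le_add p⟩

section HalfNormSup

variable {𝕜 E F ι : Type*} [NontriviallyNormedField 𝕜] [SeminormedAddCommGroup E] [NormedSpace 𝕜 E]
  [SeminormedAddCommGroup F] [NormedSpace 𝕜 F] {f : ι → E →L[𝕜] F} {c : ℝ}

/-- The seminorm `z ↦ max (‖z‖ / 2) (⨆ i, ‖f i z‖)` used to renorm `E` by a uniformly bounded family
of operators `f`. If `‖f i z‖` is unbounded in `i` for some `z`, the supremum of seminorms takes the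
junk value `0`. -/
noncomputable def halfNormSup (f : ι → E →L[𝕜] F) : Seminorm 𝕜 E :=
  (2⁻¹ : NNReal) • normSeminorm 𝕜 E ⊔ ⨆ i, (normSeminorm 𝕜 F).comp (f i : E →ₗ[𝕜] F)

theorem halfNormSup_apply (hf : ∀ i, ‖f i‖ ≤ c) (z : E) :
    halfNormSup f z = max (‖z‖ / 2) (⨆ i, ‖f i z‖) := by
  have hbdd : BddAbove (Set.range fun i => (normSeminorm 𝕜 F).comp (f i : E →ₗ[𝕜] F)) :=
    Seminorm.bddAbove_range_iff.2 fun z =>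
      ⟨c * ‖z‖, Set.forall_mem_range.2 fun i => (f i).le_of_opNorm_le (hf i) z⟩
  simp [halfNormSup, Seminorm.iSup_apply hbdd, NNReal.smul_def, div_eq_inv_mul]

theorem norm_le_two_mul_halfNormSup (f : ι → E →L[𝕜] F) (z : E) : ‖z‖ ≤ 2 * halfNormSup f z := by
  have : (2⁻¹ : ℝ) * ‖z‖ ≤ halfNormSup f z := le_max_left _ _
  linarith

theorem norm_apply_le_halfNormSup (hf : ∀ i, ‖f i‖ ≤ c) (i : ι) (z : E) :
    ‖f i z‖ ≤ halfNormSup f z := by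
  have hbdd : BddAbove (Set.range fun i => ‖f i z‖) :=
    ⟨c * ‖z‖, Set.forall_mem_range.2 fun i => (f i).le_of_opNorm_le (hf i) z⟩
  rw [halfNormSup_apply hf]
  exact (le_ciSup hbdd i).trans (le_max_right _ _)

theorem halfNormSup_le (hf : ∀ i, ‖f i‖ ≤ c) {z : E} {r : ℝ} (hz : ‖z‖ / 2 ≤ r)
    (hr : ∀ i, ‖f i z‖ ≤ r) : halfNormSup f z ≤ r := by
  rw [halfNormSup_apply hf]
  exact max_le hz (Real.iSup_le hr ((by positivity : 0 ≤ ‖z‖ / 2).trans hz))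

theorem halfNormSup_le_mul_norm (hc : 1 / 2 ≤ c) (hf : ∀ i, ‖f i‖ ≤ c) (z : E) :
    halfNormSup f z ≤ c * ‖z‖ :=
  halfNormSup_le hf (by nlinarith [norm_nonneg z]) fun i => (f i).le_of_opNorm_le (hf i) z

end HalfNormSup

section Biorthogonal

variable {𝕜 X Γ : Type*} [NontriviallyNormedField 𝕜] [SeminormedAddCommGroup X] [NormedSpace 𝕜 X]
  [DecidableEq Γ] {x : Γ → X} {xs : Γ → X →L[𝕜] 𝕜} {c : ℝ}

theorem one_le_of_biorthogonal [Nonempty Γ] (hbi : ∀ α β, xs β (x α) = if α = β then 1 else 0)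
    (hnorm : ∀ γ, ‖x γ‖ ≤ 1) (hdual : ∀ γ, ‖xs γ‖ ≤ c) : 1 ≤ c := by
  obtain ⟨γ⟩ := ‹Nonempty Γ›
  calc
    1 = ‖xs γ (x γ)‖ := by simp [hbi]
    _ ≤ ‖xs γ‖ := (xs γ).unit_le_opNorm _ (hnorm γ)
    _ ≤ c := hdual γ

theorem halfNormSup_sub_eq_one_of_biorthogonal
    (hbi : ∀ α β, xs β (x α) = if α = β then 1 else 0) (hnorm : ∀ γ, ‖x γ‖ ≤ 1)
    (hdual : ∀ γ, ‖xs γ‖ ≤ c) {α β : Γ} (hαβ : α ≠ β) : halfNormSup xs (x α - x β) = 1 := by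
  have hvalues (γ : Γ) : ‖xs γ (x α - x β)‖ ≤ 1 := by
    rw [map_sub, hbi, hbi]
    split_ifs <;> simp
  have hattained : ‖xs α (x α - x β)‖ = 1 := by simp [hbi, hαβ.symm]
  have hhalf : ‖x α - x β‖ / 2 ≤ 1 := by
    linarith [norm_sub_le (x α) (x β), hnorm α, hnorm β]
  exact le_antisymm (halfNormSup_le hdual hhalf hvalues)
    (hattained ▸ norm_apply_le_halfNormSup hdual α (x α - x β))

theorem biorthogonal_renorm_equilateral_general [Nonempty Γ]
    (hbi : ∀ α β, xs β (x α) = if α = β then 1 else 0) (hnorm : ∀ γ, ‖x γ‖ ≤ 1)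
    (hdual : ∀ γ, ‖xs γ‖ ≤ c) :
    ∃ p : Seminorm 𝕜 X,
      (∃ a b : ℝ, 0 < a ∧ 0 < b ∧ (∀ z, a * p z ≤ ‖z‖ ∧ ‖z‖ ≤ b * p z) ∧ b / a ≤ 2 * c) ∧
      ∃ lam : ℝ, 0 < lam ∧ ∀ γ₁ γ₂, x γ₁ ≠ x γ₂ → p (x γ₁ - x γ₂) = lam := by
  have hc : 1 ≤ c := one_le_of_biorthogonal hbi hnorm hdual
  have hupper (z : X) : c⁻¹ * halfNormSup xs z ≤ ‖z‖ :=
    (inv_mul_le_iff₀ (by positivity)).2 (halfNormSup_le_mul_norm (by linarith) hdual z)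
  exact ⟨halfNormSup xs,
    ⟨c⁻¹, 2, by positivity, two_pos, fun z => ⟨hupper z, norm_le_two_mul_halfNormSup xs z⟩,
      (div_inv_eq_mul 2 c).le⟩,
    1, one_pos, fun _ _ hne =>
      halfNormSup_sub_eq_one_of_biorthogonal hbi hnorm hdual (ne_of_apply_ne x hne)⟩

end Biorthogonal

/-- **Corollary.** If `{(x γ, xs γ)}` is a biorthogonal system in a real Banach space `X`
with `‖x γ‖ = 1` and `‖xs γ‖ ≤ c`, then there is an equivalent norm `N` on `X` at
Banach–Mazur distance at most `2c` from the original norm (witnessed by the identity: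
`a * N x ≤ ‖x‖ ≤ b * N x` with `b / a ≤ 2c`) in which `{x γ}` is equilateral. -/
theorem biorthogonal_renorm_equilateral
    (X : Type*) [NormedAddCommGroup X] [NormedSpace ℝ X] [CompleteSpace X]
    {Γ : Type*} [Nonempty Γ] [DecidableEq Γ] (x : Γ → X) (xs : Γ → X →L[ℝ] ℝ)
    (hbi : ∀ α β : Γ, xs β (x α) = (if α = β then (1 : ℝ) else 0))
    {c : ℝ} (hnorm : ∀ γ, ‖x γ‖ = 1) (hdual : ∀ γ, ‖xs γ‖ ≤ c) :
    ∃ N : X → ℝ, IsNorm N ∧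
      (∃ a b : ℝ, 0 < a ∧ 0 < b ∧ (∀ z, a * N z ≤ ‖z‖ ∧ ‖z‖ ≤ b * N z) ∧
        b / a ≤ 2 * c) ∧
      (∃ lam : ℝ, 0 < lam ∧
        ∀ γ₁ γ₂ : Γ, x γ₁ ≠ x γ₂ → N (x γ₁ - x γ₂) = lam) := by
  obtain ⟨p, ⟨a, b, ha, hb, hab, hratio⟩, hequi⟩ :=
    biorthogonal_renorm_equilateral_general hbi (fun γ => (hnorm γ).le) hdual
  exact ⟨p, .of_seminorm p fun z hz => norm_le_zero_iff.1 (by simpa [hz] using (hab z).2),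
    ⟨a, b, ha, hb, hab, hratio⟩, hequi⟩
end

section
/- Let S be a λ-equilateral set in a real normed space (X, ‖·‖) and suppose S is bounded with M = sup{‖x‖ : x ∈ S} < ∞. Then S is a bounded and separated antipodal set with constants c₁ = M, c₂ = 1 and d = λ. -/
/-!
By Hahn–Banach, some functional `f` of norm at most `1` attains `‖y - x‖` at `y - x`. Being
`1`-Lipschitz, `f` cannot exceed `f y` within distance `‖y - x‖` of `x`, nor fall below `f x` within
distance `‖y - x‖` of `y`; an equilateral set containing `x` and `y` lies in both of these balls.
-/

section PseudoMetric

variable {α : Type*} [PseudoMetricSpace α]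

theorem dist_le_of_pairwise_dist_le {S : Set α} {r : ℝ} (hr : 0 ≤ r)
    (hS : S.Pairwise fun a b => dist a b ≤ r) {a b : α} (ha : a ∈ S) (hb : b ∈ S) :
    dist a b ≤ r := by
  obtain rfl | hab := eq_or_ne a b
  · rwa [dist_self]
  · exact hS ha hb hab

variable {f : α → ℝ} {x y z : α}

theorem map_le_map_of_lipschitzWith_one_of_dist_le_left (hf : LipschitzWith 1 f)
    (hxy : dist x y ≤ f y - f x) (hz : dist x z ≤ dist x y) : f z ≤ f y := by
  have hzx : f z ≤ f x + dist z x := by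
    simpa only [NNReal.coe_one, one_mul] using hf.le_add_mul z x
  linarith [dist_comm z x]

theorem map_le_map_of_lipschitzWith_one_of_dist_le_right (hf : LipschitzWith 1 f)
    (hxy : dist x y ≤ f y - f x) (hz : dist z y ≤ dist x y) : f x ≤ f z := by
  have hyz : f y ≤ f z + dist y z := by
    simpa only [NNReal.coe_one, one_mul] using hf.le_add_mul y z
  linarith [dist_comm y z]

end PseudoMetric

section Seminormed

variable {X : Type*} [SeminormedAddCommGroup X] [NormedSpace ℝ X]

theorem exists_norm_le_one_sub_eq_dist (x y : X) :
    ∃ f : X →L[ℝ] ℝ, ‖f‖ ≤ 1 ∧ f y - f x = dist x y := by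
  obtain ⟨f, hf, hfyx⟩ := exists_dual_vector'' ℝ (y - x)
  exact ⟨f, hf, by rw [← map_sub, hfyx, dist_eq_norm']; rfl⟩

theorem exists_norm_le_one_sub_eq_dist_forall_mem {S : Set X} {x y : X}
    (hx : ∀ z ∈ S, dist x z ≤ dist x y) (hy : ∀ z ∈ S, dist z y ≤ dist x y) :
    ∃ f : X →L[ℝ] ℝ, ‖f‖ ≤ 1 ∧ f y - f x = dist x y ∧ ∀ z ∈ S, f x ≤ f z ∧ f z ≤ f y := by
  obtain ⟨f, hf, hfxy⟩ := exists_norm_le_one_sub_eq_dist x y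
  have hlip : LipschitzWith 1 f := f.lipschitz.weaken hf
  exact ⟨f, hf, hfxy, fun z hz =>
    ⟨map_le_map_of_lipschitzWith_one_of_dist_le_right hlip hfxy.ge (hy z hz),
      map_le_map_of_lipschitzWith_one_of_dist_le_left hlip hfxy.ge (hx z hz)⟩⟩

end Seminormed

/-- **Example (3).** A bounded `λ`-equilateral set `S` in a real normed space, with
`M = sup {‖x‖ : x ∈ S}`, is a bounded and separated antipodal set with constants
`c₁ = M`, `c₂ = 1` and `d = λ`. -/
theorem equilateral_bddSepAntipodal
    (X : Type*) [NormedAddCommGroup X] [NormedSpace ℝ X]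
    (S : Set X) {lam : ℝ} (hlam : 0 < lam)
    (heq : ∀ x ∈ S, ∀ y ∈ S, x ≠ y → ‖x - y‖ = lam)
    {M : ℝ} (hM : IsLUB ((fun x => ‖x‖) '' S) M) :
    BddSepAntipodal S M 1 lam := by
  have hdist : S.Pairwise fun a b => dist a b = lam := fun a ha b hb hab =>
    (dist_eq_norm a b).trans (heq a ha b hb hab)
  have hle {a b : X} (ha : a ∈ S) (hb : b ∈ S) : dist a b ≤ lam :=
    dist_le_of_pairwise_dist_le hlam.le (hdist.mono' fun _ _ => le_of_eq) ha hb
  refine ⟨fun x hx => hM.1 (Set.mem_image_of_mem _ hx), fun x hx y hy hxy => ?_⟩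
  have hxy_dist : dist x y = lam := hdist hx hy hxy
  obtain ⟨f, hf, hfxy, hfS⟩ := exists_norm_le_one_sub_eq_dist_forall_mem
    (fun z hz => (hle hx hz).trans_eq hxy_dist.symm)
    (fun z hz => (hle hz hy).trans_eq hxy_dist.symm)
  exact ⟨f, hf, (hfxy.trans hxy_dist).ge, hfS⟩
end

section
/- Let (X, ‖·‖) be a real normed space, Z a linear subspace of X, and |||·||| a norm on Z such that c₁|||x||| ≤ ‖x‖ ≤ c₂|||x||| for all x ∈ Z, where 0 < c₁ ≤ c₂. Then there exists a norm |||·|||' on all of X extending the comparison, i.e. c₁|||x|||' ≤ ‖x‖ ≤ c₂|||x|||' for all x ∈ X, and |||x|||' = |||x||| for all x ∈ Z. -/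
/-! The extension is the infimal convolution `x ↦ inf_{z ∈ Z} (N z + ‖x - z‖ / c₁)`. It is the
largest seminorm lying below `‖·‖ / c₁` on `X` and below `N` on `Z`. Hence it dominates `‖·‖ / c₂`,
which also lies below both. It agrees with `N` on `Z` because `N ≤ ‖·‖ / c₁` there, so that
`N z ≤ N w + N (z - w) ≤ N w + ‖z - w‖ / c₁` for all `z` and `w` in `Z`. -/

open scoped NNReal

section InfConvolution

variable {𝕜 E F : Type*} [NormedField 𝕜] [AddCommGroup E] [Module 𝕜 E] [AddCommGroup F]
  [Module 𝕜 F] (f : E →ₗ[𝕜] F) (p : Seminorm 𝕜 E) (q r : Seminorm 𝕜 F)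

theorem bddBelow_range_add_seminorm_sub (x : F) :
    BddBelow (Set.range fun z => p z + q (x - f z)) :=
  ⟨0, Set.forall_mem_range.2 fun _ => by positivity⟩

/-- The infimal convolution of `q` with the image of `p` under `f`, used to extend `p` from `E`
to `F`. For `f = LinearMap.id` it is `p ⊓ q`. -/
noncomputable def infConvolution : Seminorm 𝕜 F :=
  Seminorm.ofSMulLE (fun x => ⨅ z, p z + q (x - f z))
    (le_antisymm
      (by simpa using ciInf_le (bddBelow_range_add_seminorm_sub f p q 0) 0)
      (Real.iInf_nonneg fun _ => by positivity))
    (fun x y => le_ciInf_add_ciInf fun z w =>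
      calc
        ⨅ u, p u + q (x + y - f u) ≤ p (z + w) + q (x + y - f (z + w)) :=
          ciInf_le (bddBelow_range_add_seminorm_sub f p q _) _
        _ ≤ (p z + p w) + (q (x - f z) + q (y - f w)) := by
          rw [f.map_add, add_sub_add_comm]
          exact add_le_add (map_add_le_add p _ _) (map_add_le_add q _ _)
        _ = (p z + q (x - f z)) + (p w + q (y - f w)) := add_add_add_comm _ _ _ _)
    (fun a x => by
      rw [Real.mul_iInf_of_nonneg (norm_nonneg a)]
      refine le_ciInf fun z => ?_
      calc
        ⨅ u, p u + q (a • x - f u) ≤ p (a • z) + q (a • x - f (a • z)) :=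
          ciInf_le (bddBelow_range_add_seminorm_sub f p q _) _
        _ = ‖a‖ * (p z + q (x - f z)) := by
          rw [map_smul f, ← smul_sub, map_smul_eq_mul, map_smul_eq_mul, mul_add])

theorem infConvolution_apply_le (x : F) (z : E) :
    infConvolution f p q x ≤ p z + q (x - f z) :=
  ciInf_le (bddBelow_range_add_seminorm_sub f p q x) z

theorem infConvolution_le_right : infConvolution f p q ≤ q := fun x => by
  simpa using infConvolution_apply_le f p q x 0

theorem infConvolution_comp_le : (infConvolution f p q).comp f ≤ p := fun z => by
  simpa using infConvolution_apply_le f p q (f z) z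

variable {f p q r}

theorem le_infConvolution_apply {a : ℝ} {x : F} (h : ∀ z, a ≤ p z + q (x - f z)) :
    a ≤ infConvolution f p q x :=
  le_ciInf h

theorem le_infConvolution (hp : r.comp f ≤ p) (hq : r ≤ q) : r ≤ infConvolution f p q :=
  fun x => le_infConvolution_apply fun z =>
    calc
      r x ≤ r (f z) + r (x - f z) := le_map_add_map_sub r _ _
      _ ≤ p z + q (x - f z) := add_le_add (hp z) (hq _)

theorem infConvolution_comp_eq (h : p ≤ q.comp f) : (infConvolution f p q).comp f = p :=
  le_antisymm (infConvolution_comp_le f p q) fun z => le_infConvolution_apply fun w =>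
    calc
      p z ≤ p w + p (z - w) := le_map_add_map_sub p _ _
      _ ≤ p w + q (f z - f w) := by
        rw [← map_sub f]
        exact add_le_add_right (h _) _

end InfConvolution

section NormComparison

variable {𝕜 X : Type*} [NormedField 𝕜] [SeminormedAddCommGroup X] [NormedSpace 𝕜 X]
  {p : Seminorm 𝕜 X} {c : ℝ≥0}

theorem le_inv_smul_normSeminorm_iff (hc : 0 < c) :
    p ≤ c⁻¹ • normSeminorm 𝕜 X ↔ ∀ x, c * p x ≤ ‖x‖ :=
  forall_congr' fun _ => le_inv_mul_iff₀ (NNReal.coe_pos.2 hc)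

theorem inv_smul_normSeminorm_le_iff (hc : 0 < c) :
    c⁻¹ • normSeminorm 𝕜 X ≤ p ↔ ∀ x, ‖x‖ ≤ c * p x :=
  forall_congr' fun _ => inv_mul_le_iff₀ (NNReal.coe_pos.2 hc)

end NormComparison

theorem isNorm_of_norm_le_mul {X : Type*} [NormedAddCommGroup X] [NormedSpace ℝ X]
    {p : Seminorm ℝ X} {c : ℝ} (h : ∀ x, ‖x‖ ≤ c * p x) : IsNorm p :=
  ⟨fun x => ⟨fun hx => norm_le_zero_iff.1 (by simpa [hx] using h x),
    fun hx => by rw [hx, map_zero]⟩, map_smul_eq_mul p, map_add_le_add p⟩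

theorem norm_extension_subspace_general {𝕜 X : Type*} [NormedField 𝕜]
    [SeminormedAddCommGroup X] [NormedSpace 𝕜 X] (Z : Submodule 𝕜 X) (p : Seminorm 𝕜 Z)
    {c₁ c₂ : ℝ} (hc₁ : 0 < c₁) (hc₁₂ : c₁ ≤ c₂)
    (hp : ∀ z : Z, c₁ * p z ≤ ‖z‖ ∧ ‖z‖ ≤ c₂ * p z) :
    ∃ p' : Seminorm 𝕜 X,
      (∀ x, c₁ * p' x ≤ ‖x‖ ∧ ‖x‖ ≤ c₂ * p' x) ∧ p'.comp Z.subtype = p := by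
  have hc₂ : 0 < c₂ := hc₁.trans_le hc₁₂
  lift c₁ to ℝ≥0 using hc₁.le
  lift c₂ to ℝ≥0 using hc₂.le
  norm_cast at hc₁ hc₂ hc₁₂
  obtain ⟨hpc₁, hpc₂⟩ := forall_and.1 hp
  have hupper : p ≤ (c₁⁻¹ • normSeminorm 𝕜 X).comp Z.subtype :=
    (le_inv_smul_normSeminorm_iff hc₁).2 hpc₁
  have hlower : (c₂⁻¹ • normSeminorm 𝕜 X).comp Z.subtype ≤ p :=
    (inv_smul_normSeminorm_le_iff hc₂).2 hpc₂
  have hnorms : c₂⁻¹ • normSeminorm 𝕜 X ≤ c₁⁻¹ • normSeminorm 𝕜 X := fun x =>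
    mul_le_mul_of_nonneg_right (NNReal.coe_le_coe.2 (inv_anti₀ hc₁ hc₁₂)) (norm_nonneg x)
  refine ⟨infConvolution Z.subtype p (c₁⁻¹ • normSeminorm 𝕜 X), forall_and.2 ⟨?_, ?_⟩,
    infConvolution_comp_eq hupper⟩
  · exact (le_inv_smul_normSeminorm_iff hc₁).1 (infConvolution_le_right _ _ _)
  · exact (inv_smul_normSeminorm_le_iff hc₂).1 (le_infConvolution hlower hnorms)

/-- **Remark 1(1).** If `Z` is a linear subspace of a real normed space `X` and `N` is a
norm on `Z` satisfying `c₁ * N z ≤ ‖z‖ ≤ c₂ * N z` on `Z` (with `0 < c₁ ≤ c₂`), then `N`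
extends to a norm `N'` on all of `X` satisfying `c₁ * N' x ≤ ‖x‖ ≤ c₂ * N' x` for all
`x ∈ X`. -/
theorem norm_extension_subspace
    (X : Type*) [NormedAddCommGroup X] [NormedSpace ℝ X]
    (Z : Subspace ℝ X) (N : Z → ℝ) (hN : IsNorm N)
    {c₁ c₂ : ℝ} (hc₁ : 0 < c₁) (hc₁₂ : c₁ ≤ c₂)
    (hcomp : ∀ z : Z, c₁ * N z ≤ ‖z‖ ∧ ‖z‖ ≤ c₂ * N z) :
    ∃ N' : X → ℝ, IsNorm N' ∧
      (∀ x : X, c₁ * N' x ≤ ‖x‖ ∧ ‖x‖ ≤ c₂ * N' x) ∧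
      ∀ z : Z, N' (z : X) = N z := by
  obtain ⟨p, hp, hpN⟩ :=
    norm_extension_subspace_general Z (Seminorm.of N hN.2.2 hN.2.1) hc₁ hc₁₂ hcomp
  exact ⟨p, isNorm_of_norm_le_mul fun x => (hp x).2, hp, DFunLike.congr_fun hpN⟩
end

section
/- Let K be an infinite compact Hausdorff space. Then the unit sphere of the Banach space C(K) of real-valued continuous functions on K with the supremum norm contains an infinite 2-equilateral set; i.e., there exists a sequence (xₙ) in C(K) with ‖xₙ‖_∞ = 1 for all n and ‖xₙ − xₘ‖_∞ = 2 for all n ≠ m. -/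
/-!
Take distinct points `p 0, p 1, …`. Complete regularity provides functions `x n` of norm one with
`x n (p n) = 1` and `x n (p k) = -1` for all `k < n`. For `n < m` the values of `x n` and `x m` at
`p n` are then `1` and `-1`, so the triangle inequality `‖x n - x m‖ ≤ 2` is attained at `p n`.
-/

open Set
open scoped BoundedContinuousFunction

section

variable {X : Type*} [TopologicalSpace X]

theorem norm_sub_eq_norm_add_norm_of_norm_apply_sub_apply {E : Type*} [SeminormedAddCommGroup E]
    {f g : X →ᵇ E} {t : X} (h : ‖f t - g t‖ = ‖f‖ + ‖g‖) : ‖f - g‖ = ‖f‖ + ‖g‖ :=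
  le_antisymm (norm_sub_le f g) (h ▸ (f - g).norm_coe_le_norm t)

theorem exists_norm_eq_one_apply_eq_one_eqOn_neg_one [CompletelyRegularSpace X]
    {t : X} {s : Set X} (hs : IsClosed s) (ht : t ∉ s) :
    ∃ f : X →ᵇ ℝ, ‖f‖ = 1 ∧ f t = 1 ∧ EqOn f (-1) s := by
  obtain ⟨u, hu, hut, hus⟩ := CompletelyRegularSpace.completely_regular t s hs ht
  have abs_le_one (y : X) : ‖1 - 2 * (u y : ℝ)‖ ≤ 1 := by
    rw [Real.norm_eq_abs, abs_le]
    constructor <;> linarith [(u y).2.1, (u y).2.2]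
  let f : X →ᵇ ℝ := .ofNormedAddCommGroup (fun y ↦ 1 - 2 * (u y : ℝ)) (by fun_prop) 1 abs_le_one
  have hft : f t = 1 := by simp [f, hut]
  refine ⟨f, le_antisymm (f.norm_le zero_le_one |>.2 abs_le_one) ?_, hft, fun y hy ↦ ?_⟩
  · simpa [hft] using f.norm_coe_le_norm t
  · have huy : u y = 1 := hus hy
    norm_num [f, huy]

theorem exists_norm_eq_one_apply_eq_one_forall_lt_apply_eq_neg_one [T35Space X]
    {ι : Type*} [Preorder ι] [LocallyFiniteOrderBot ι] {p : ι → X} (hp : p.Injective) (i : ι) :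
    ∃ f : X →ᵇ ℝ, ‖f‖ = 1 ∧ f (p i) = 1 ∧ ∀ j < i, f (p j) = -1 := by
  have isClosed_previous : IsClosed (p '' Iio i) := ((finite_Iio i).image p).isClosed
  have notMem_previous : p i ∉ p '' Iio i := by simp [hp.mem_set_image]
  obtain ⟨f, hf, hfi, hfj⟩ :=
    exists_norm_eq_one_apply_eq_one_eqOn_neg_one isClosed_previous notMem_previous
  exact ⟨f, hf, hfi, fun j hj ↦ hfj (mem_image_of_mem p hj)⟩

end

theorem CK_two_equilateral_sequence_general (X : Type*) [TopologicalSpace X] [T35Space X]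
    [Infinite X] :
    ∃ x : ℕ → X →ᵇ ℝ, (∀ n, ‖x n‖ = 1) ∧ ∀ n m : ℕ, n ≠ m → ‖x n - x m‖ = 2 := by
  let p : ℕ ↪ X := Infinite.natEmbedding X
  choose x norm_x x_self x_lt using
    exists_norm_eq_one_apply_eq_one_forall_lt_apply_eq_neg_one p.injective
  have norm_sub_of_lt {n m : ℕ} (h : n < m) : ‖x n - x m‖ = 2 := by
    have attained : ‖x n (p n) - x m (p n)‖ = ‖x n‖ + ‖x m‖ := by
      norm_num [x_self, x_lt m n h, norm_x]
    rw [norm_sub_eq_norm_add_norm_of_norm_apply_sub_apply attained, norm_x, norm_x,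
      one_add_one_eq_two]
  refine ⟨x, norm_x, fun n m hnm ↦ ?_⟩
  rcases hnm.lt_or_gt with h | h
  · exact norm_sub_of_lt h
  · rw [norm_sub_rev, norm_sub_of_lt h]

/-- **Note (2).** For every infinite compact Hausdorff space `K`, the unit sphere of the
Banach space `C(K, ℝ)` (with the sup norm) contains an infinite `2`-equilateral set:
there is a sequence of norm-one functions with pairwise distances all equal to `2`. -/
theorem CK_two_equilateral_sequence
    (K : Type*) [TopologicalSpace K] [CompactSpace K] [T2Space K] [Infinite K] :
    ∃ x : ℕ → C(K, ℝ), (∀ n, ‖x n‖ = 1) ∧ ∀ n m : ℕ, n ≠ m → ‖x n - x m‖ = 2 := by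
  obtain ⟨x, norm_x, norm_sub⟩ := CK_two_equilateral_sequence_general K
  exact ⟨fun n ↦ (x n).toContinuousMap, fun n ↦ (x n).norm_toContinuousMap_eq.trans (norm_x n),
    fun n m hnm ↦ (x n - x m).norm_toContinuousMap_eq.trans (norm_sub n m hnm)⟩
end

section
/- Every infinite dimensional real Banach space X contains an infinite bounded and separated antipodal set with constants c₁ = 1, c₂ = 1 and d = 1. Consequently, defining ant(X) = sup{d > 0 : X contains an infinite bounded and separated antipodal set with constants c₁ = c₂ = 1 and separation constant d}, one has ant(X) ≥ 1; moreover ant(X) ≤ 2. -/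
/-! Choose unit vectors `x₀, x₁, …` and norming functionals `f₀, f₁, …` alternately, with each `xₙ`
in the common kernel of the earlier functionals; since `X` is infinite dimensional, this never
stops. Unlike for an Auerbach system, `fₙ xₘ` is not controlled for `m < n`, but by Ramsey's theorem
we may pass to a subsequence on which all these numbers are nonnegative or all are negative. For
`m < n`, the functional `-fₘ` in the first case, and `(fₙ - fₘ) / 2` in the second, then attains its
minimum over the sequence at `xₘ` and its maximum at `xₙ`, with a gap of at least `1`. -/

open Filter

theorem exists_strictMono_forall_lt_eq {κ : Type*} [Finite κ] (c : ℕ → ℕ → κ) :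
    ∃ g : ℕ → ℕ, StrictMono g ∧ ∃ k, ∀ m n, m < n → c (g m) (g n) = k := by
  have eventually_const (c : ℕ → κ) : ∃ k, ∀ᶠ n in hyperfilter ℕ, c n = k :=
    Ultrafilter.eventually_exists_iff.1 (Eventually.of_forall fun n => ⟨c n, rfl⟩)
  choose color hcolor using fun m => eventually_const (c m)
  obtain ⟨k, hk⟩ := eventually_const color
  obtain ⟨g, -, hg⟩ := exists_seq_of_forall_finset_exists (fun m => color m = k)
    (fun m n => m < n ∧ c m n = k) fun s hs => by
      have hlater : ∀ᶠ n in hyperfilter ℕ, ∀ m ∈ s, m < n ∧ c m n = k :=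
        s.eventually_all.2 fun m hm =>
          ((eventually_gt_atTop m).filter_mono Nat.hyperfilter_le_atTop).and (hs m hm ▸ hcolor m)
      exact (hk.and hlater).exists
  exact ⟨g, fun m n hmn => (hg m n hmn).1, k, fun m n hmn => (hg m n hmn).2⟩

section AntipodalSets

variable {X : Type*} [NormedAddCommGroup X] [NormedSpace ℝ X]

theorem BddSepAntipodal.le_two_mul {S : Set X} {c₁ c₂ d : ℝ} (h : BddSepAntipodal S c₁ c₂ d)
    (hS : S.Nontrivial) : d ≤ 2 * (c₂ * c₁) := by
  obtain ⟨x, hx, y, hy, hxy⟩ := hS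
  obtain ⟨f, hf, hd, -⟩ := h.2 x hx y hy hxy
  have hfx : |f x| ≤ c₂ * c₁ := f.le_of_opNorm_le_of_le hf (h.1 x hx)
  have hfy : |f y| ≤ c₂ * c₁ := f.le_of_opNorm_le_of_le hf (h.1 y hy)
  linarith [neg_abs_le (f x), le_abs_self (f y)]

theorem bddSepAntipodal_range_of_lt {ι : Type*} [LinearOrder ι] {x : ι → X} {c₁ c₂ d : ℝ}
    (hx : ∀ i, ‖x i‖ ≤ c₁)
    (hsep : ∀ i j, i < j → ∃ f : X →L[ℝ] ℝ, ‖f‖ ≤ c₂ ∧ d ≤ f (x j) - f (x i) ∧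
      ∀ k, f (x i) ≤ f (x k) ∧ f (x k) ≤ f (x j)) :
    BddSepAntipodal (Set.range x) c₁ c₂ d := by
  refine ⟨Set.forall_mem_range.2 hx, ?_⟩
  rintro _ ⟨i, rfl⟩ _ ⟨j, rfl⟩ hij
  rcases lt_or_gt_of_ne (ne_of_apply_ne x hij) with hlt | hgt
  · obtain ⟨f, hf, hd, hbetween⟩ := hsep i j hlt
    exact ⟨f, hf, hd, Set.forall_mem_range.2 hbetween⟩
  · obtain ⟨f, hf, hd, hbetween⟩ := hsep j i hgt
    refine ⟨-f, (norm_neg f).trans_le hf, ?_, Set.forall_mem_range.2 fun k => ?_⟩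
    · simpa only [neg_apply, neg_sub_neg] using hd
    · exact ⟨neg_le_neg (hbetween k).2, neg_le_neg (hbetween k).1⟩

/-- A one-sided Auerbach system: vectors and functionals in the unit balls with `f i (x i) = 1`,
where biorthogonality `f i (x j) = 0` is only required for `i < j`. It replaces Auerbach systems in
the construction of antipodal sets and, unlike them, can be built greedily. -/
structure IsTriangularAuerbach {ι : Type*} [LT ι] (x : ι → X) (f : ι → X →L[ℝ] ℝ) : Prop where
  norm_vec_le (i : ι) : ‖x i‖ ≤ 1
  norm_functional_le (i : ι) : ‖f i‖ ≤ 1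
  apply_self (i : ι) : f i (x i) = 1
  apply_of_lt (i j : ι) : i < j → f i (x j) = 0

theorem exists_ne_zero_forall_apply_eq_zero (hX : ¬ FiniteDimensional ℝ X)
    (s : Finset (X →L[ℝ] ℝ)) : ∃ x : X, x ≠ 0 ∧ ∀ f ∈ s, f x = 0 := by
  let Φ : X →ₗ[ℝ] s → ℝ := LinearMap.pi fun f => (f : X →L[ℝ] ℝ)
  have hΦ : LinearMap.ker Φ ≠ ⊥ := fun hker =>
    hX (FiniteDimensional.of_injective Φ (LinearMap.ker_eq_bot.1 hker))
  obtain ⟨x, hxΦ, hx⟩ := (LinearMap.ker Φ).exists_mem_ne_zero_of_ne_bot hΦ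
  exact ⟨x, hx, fun f hf => congrFun (LinearMap.mem_ker.1 hxΦ) ⟨f, hf⟩⟩

theorem exists_isTriangularAuerbach (hX : ¬ FiniteDimensional ℝ X) :
    ∃ (x : ℕ → X) (f : ℕ → X →L[ℝ] ℝ), IsTriangularAuerbach x f := by
  classical
  obtain ⟨p, hp, hpp⟩ := exists_seq_of_forall_finset_exists
    (fun p : X × (X →L[ℝ] ℝ) => ‖p.1‖ = 1 ∧ ‖p.2‖ = 1 ∧ p.2 p.1 = 1)
    (fun p q => p.2 q.1 = 0) fun s _ => by
      obtain ⟨x, hx, hxs⟩ := exists_ne_zero_forall_apply_eq_zero hX (s.image Prod.snd)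
      have hx' : ‖x‖ ≠ 0 := norm_ne_zero_iff.2 hx
      obtain ⟨f, hf, hfx⟩ := exists_dual_vector ℝ x hx'
      refine ⟨(‖x‖⁻¹ • x, f), ⟨norm_smul_inv_norm hx, hf, ?_⟩, fun p hp => ?_⟩
      · simp [hfx, hx']
      · simp [hxs p.2 (Finset.mem_image_of_mem _ hp)]
  exact ⟨fun n => (p n).1, fun n => (p n).2, fun n => (hp n).1.le, fun n => (hp n).2.1.le,
    fun n => (hp n).2.2, hpp⟩

namespace IsTriangularAuerbach

variable {ι : Type*} {x : ι → X} {f : ι → X →L[ℝ] ℝ}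

theorem comp_strictMono {κ : Type*} [Preorder ι] [Preorder κ] (h : IsTriangularAuerbach x f)
    {g : κ → ι} (hg : StrictMono g) : IsTriangularAuerbach (x ∘ g) (f ∘ g) where
  norm_vec_le i := h.norm_vec_le (g i)
  norm_functional_le i := h.norm_functional_le (g i)
  apply_self i := h.apply_self (g i)
  apply_of_lt _ _ hij := h.apply_of_lt _ _ (hg hij)

theorem abs_apply_le_one [LT ι] (h : IsTriangularAuerbach x f) (i j : ι) : |f i (x j)| ≤ 1 := by
  simpa using (f i).le_of_opNorm_le_of_le (h.norm_functional_le i) (h.norm_vec_le j)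

variable [LinearOrder ι]

theorem injective (h : IsTriangularAuerbach x f) : Function.Injective x :=
  Function.Injective.of_lt_imp_ne fun i j hij hx => one_ne_zero <| by
    rw [← h.apply_self i, hx, h.apply_of_lt i j hij]

theorem bddSepAntipodal_of_nonneg (h : IsTriangularAuerbach x f)
    (hnonneg : ∀ i j, i < j → 0 ≤ f j (x i)) : BddSepAntipodal (Set.range x) 1 1 1 := by
  refine bddSepAntipodal_range_of_lt h.norm_vec_le fun i j hij =>
    ⟨-f i, (norm_neg (f i)).trans_le (h.norm_functional_le i), ?_, fun k => ?_⟩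
  · simp [h.apply_self i, h.apply_of_lt i j hij]
  · have hle : f i (x k) ≤ 1 := (abs_le.1 (h.abs_apply_le_one i k)).2
    have hge : 0 ≤ f i (x k) := by
      rcases lt_trichotomy k i with hki | rfl | hik
      · exact hnonneg k i hki
      · exact (h.apply_self k).symm ▸ zero_le_one
      · exact (h.apply_of_lt i k hik).ge
    simpa [h.apply_self i, h.apply_of_lt i j hij] using And.intro hle hge

theorem bddSepAntipodal_of_nonpos (h : IsTriangularAuerbach x f)
    (hnonpos : ∀ i j, i < j → f j (x i) ≤ 0) : BddSepAntipodal (Set.range x) 1 1 1 := by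
  refine bddSepAntipodal_range_of_lt h.norm_vec_le fun i j hij =>
    ⟨(2⁻¹ : ℝ) • (f j - f i), ?_, ?_, fun k => ?_⟩
  · calc ‖(2⁻¹ : ℝ) • (f j - f i)‖ = 2⁻¹ * ‖f j - f i‖ := by simp [norm_smul]
      _ ≤ 2⁻¹ * (1 + 1) := by
        gcongr
        exact norm_sub_le_of_le (h.norm_functional_le j) (h.norm_functional_le i)
      _ = 1 := by norm_num
  all_goals
    simp only [smul_apply, sub_apply, smul_eq_mul,
      h.apply_self, h.apply_of_lt i j hij]
  · linarith [hnonpos i j hij]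
  · have hj := abs_le.1 (h.abs_apply_le_one j k)
    have hi := abs_le.1 (h.abs_apply_le_one i k)
    rcases lt_trichotomy k i with hki | rfl | hik
    · constructor <;> linarith [hnonpos i j hij, hnonpos k i hki, hnonpos k j (hki.trans hij)]
    · constructor <;> linarith [hnonpos k j hij, h.apply_self k]
    · constructor <;> linarith [hnonpos i j hij, h.apply_of_lt i k hik]

end IsTriangularAuerbach

theorem exists_infinite_bddSepAntipodal_one (hX : ¬ FiniteDimensional ℝ X) :
    ∃ S : Set X, S.Infinite ∧ BddSepAntipodal S 1 1 1 := by
  obtain ⟨x, f, hxf⟩ := exists_isTriangularAuerbach hX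
  obtain ⟨g, hg, isNonneg, hsign⟩ := exists_strictMono_forall_lt_eq fun m n => 0 ≤ f n (x m)
  have hsub := hxf.comp_strictMono hg
  refine ⟨Set.range (x ∘ g), Set.infinite_range_of_injective hsub.injective, ?_⟩
  by_cases hpos : isNonneg
  · exact hsub.bddSepAntipodal_of_nonneg fun m n hmn => (hsign m n hmn).mpr hpos
  · exact hsub.bddSepAntipodal_of_nonpos fun m n hmn =>
      (not_le.1 (mt (hsign m n hmn).mp hpos)).le

end AntipodalSets

theorem ant_bounds_general
    (X : Type*) [NormedAddCommGroup X] [NormedSpace ℝ X] (hX : ¬ FiniteDimensional ℝ X) :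
    (∃ S : Set X, S.Infinite ∧ BddSepAntipodal S 1 1 1) ∧
    (1 ≤ sSup {d : ℝ | 0 < d ∧ ∃ S : Set X, S.Infinite ∧ BddSepAntipodal S 1 1 d}) ∧
    (sSup {d : ℝ | 0 < d ∧ ∃ S : Set X, S.Infinite ∧ BddSepAntipodal S 1 1 d} ≤ 2) := by
  have hexists := exists_infinite_bddSepAntipodal_one hX
  set D := {d : ℝ | 0 < d ∧ ∃ S : Set X, S.Infinite ∧ BddSepAntipodal S 1 1 d}
  have hone : 1 ∈ D := ⟨one_pos, hexists⟩
  have htwo : 2 ∈ upperBounds D := by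
    rintro d ⟨-, S, hS, hanti⟩
    simpa using hanti.le_two_mul hS.nontrivial
  exact ⟨hexists, le_csSup ⟨2, htwo⟩ hone, csSup_le ⟨1, hone⟩ htwo⟩

/-- **Remark 4(1).** Every infinite dimensional real Banach space `X` contains an infinite
bounded and separated antipodal set with constants `c₁ = c₂ = 1` and `d = 1` (via Day's
theorem on Auerbach systems); consequently, with
`ant(X) = sup {d > 0 : X contains an infinite bounded and separated antipodal set with
constants 1, 1, d}`, one has `1 ≤ ant(X)`; moreover `ant(X) ≤ 2`. -/
theorem ant_bounds
    (X : Type*) [NormedAddCommGroup X] [NormedSpace ℝ X] [CompleteSpace X]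
    (hX : ¬ FiniteDimensional ℝ X) :
    (∃ S : Set X, S.Infinite ∧ BddSepAntipodal S 1 1 1) ∧
    (1 ≤ sSup {d : ℝ | 0 < d ∧ ∃ S : Set X, S.Infinite ∧ BddSepAntipodal S 1 1 d}) ∧
    (sSup {d : ℝ | 0 < d ∧ ∃ S : Set X, S.Infinite ∧ BddSepAntipodal S 1 1 d} ≤ 2) :=
  ant_bounds_general X hX
end
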